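/- arXiv:1003.0982 — 2 statements merged into one kernel-verified Lean document; each statement's English description precedes it below -/
import Mathlib

section
/- Let p be a prime and G a p-group of order p^n with n ≥ 5, |G'| = p^2, and G' not contained in Z(G). Then the Schur multiplier of G does not have order p^{(n-1)(n-2)/2 - 1} (i.e. G does not satisfy s(G) = 2). -/
/-- The kernel of the canonical free presentation `FreeGroup G → G`. -/
def presentationKernel (G : Type u) [Group G] : Subgroup (FreeGroup G) :=
  (FreeGroup.lift (id : G → G)).ker

/-- The Schur multiplier `M(G) = H₂(G, ℤ)` (second integral group homology) of a
group `G`, realised via Hopf's integral formula `H₂(G, ℤ) ≅ (R ⊓ [F, F]) / [F, R]`,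
where `F = FreeGroup G` is the canonical free group surjecting onto `G` with
kernel `R`. -/
def SchurMultiplier (G : Type u) [Group G] : Type u :=
  ↥(presentationKernel G ⊓ commutator (FreeGroup G)) ⧸
    (⁅(⊤ : Subgroup (FreeGroup G)), presentationKernel G⁆.subgroupOf
      (presentationKernel G ⊓ commutator (FreeGroup G)))

/-- A finite `p`-group `H` is extraspecial if its center, derived subgroup and
Frattini subgroup coincide and have order `p`. -/
def IsExtraspecial (p : ℕ) (H : Type*) [Group H] : Prop :=
  Subgroup.center H = commutator H ∧ Subgroup.center H = frattini H ∧
    Nat.card (Subgroup.center H) = p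

namespace SchurAux

open scoped commutatorElement

theorem card_comm {E Q : Type*} [Group E] [Group Q] (f : E →* Q) (hf : Function.Surjective f)
    (N : Subgroup E) (hN : N ≤ commutator E) (hNf : N ≤ f.ker) :
    N.relIndex (f.ker ⊓ commutator E) * Nat.card (commutator Q) = N.relIndex (commutator E) := by
  have h1 : (commutator E).map f = commutator Q := by
    rw [commutator_def, commutator_def, Subgroup.map_commutator,
      Subgroup.map_top_of_surjective f hf]
  rw [← h1, ← Subgroup.relIndex_ker, ← Subgroup.inf_relIndex_right f.ker]
  exact Subgroup.relIndex_mul_relIndex _ _ _ (le_inf hNf hN) inf_le_right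

/-- commutator hom with a fixed element -/
def commHom {E : Type*} [Group E] (g : E) (hg : ∀ h : E, ⁅h, g⁆ ∈ Subgroup.center E) : E →* E where
  toFun h := ⁅h, g⁆
  map_one' := by simp
  map_mul' a b := by
    have hb := Subgroup.mem_center_iff.1 (hg b)
    have : ⁅a * b, g⁆ = a * ⁅b, g⁆ * a⁻¹ * ⁅a, g⁆ := by
      simp only [commutatorElement_def]; group
    rw [this, hb a, mul_assoc ⁅b, g⁆, mul_inv_cancel, mul_one, ← hb]

theorem step {E Q Q' : Type*} [Group E] [Group Q] [Group Q'] (π : E →* Q)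
    (hπ : Function.Surjective π) (hc : π.ker ≤ Subgroup.center E) (ρ : Q →* Q')
    (hρs : Function.Surjective ρ) (g : E) (hρ : ρ.ker = Subgroup.zpowers (π g))
    (hg : ∀ h : Q, ⁅h, π g⁆ = 1) (D : Subgroup Q) (hD : ∀ e, π e ∈ D → ⁅e, g⁆ = 1) :
    ∃ (T : Subgroup E) (_ : T.Normal) (π' : E ⧸ T →* Q'), Function.Surjective π' ∧
      π'.ker ≤ Subgroup.center (E ⧸ T) ∧ (∀ e : E, π' (e : E ⧸ T) = ρ (π e)) ∧
      Nat.card (commutator E) ∣ D.index * Nat.card (commutator (E ⧸ T)) := by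
  have hk : ∀ h : E, ⁅h, g⁆ ∈ π.ker := fun h => by
    rw [MonoidHom.mem_ker, map_commutatorElement, hg]
  have hz : ∀ h : E, ⁅h, g⁆ ∈ Subgroup.center E := fun h => hc (hk h)
  set T := (commHom g hz).range with hT
  have hTk : T ≤ π.ker := by
    rintro _ ⟨h, rfl⟩; exact hk h
  have hTn : T.Normal := by
    refine ⟨fun n hn h => ?_⟩
    have := Subgroup.mem_center_iff.1 (hc (hTk hn)) h
    rw [this, mul_assoc, mul_inv_cancel, mul_one]; exact hn
  have hTc : T ≤ commutator E := by
    rintro _ ⟨h, rfl⟩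
    exact Subgroup.commutator_mem_commutator (Subgroup.mem_top _) (Subgroup.mem_top _)
  have hcg : ∀ h : E, (h : E ⧸ T) * g = g * h := by
    intro h
    have h1 : ((⁅h, g⁆ : E) : E ⧸ T) = 1 := (QuotientGroup.eq_one_iff _).2 ⟨h, rfl⟩
    have h2 : ⁅(h : E ⧸ T), (g : E ⧸ T)⁆ = 1 := h1
    exact commutatorElement_eq_one_iff_mul_comm.1 h2
  refine ⟨T, hTn, QuotientGroup.lift T (ρ.comp π) ?_, ?_, ?_, ?_, ?_⟩
  · intro x hx
    have := hTk hx
    rw [MonoidHom.mem_ker] at this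
    simp [this]
  · intro q
    obtain ⟨e, he⟩ := (hρs.comp hπ) q
    exact ⟨(e : E ⧸ T), he⟩
  · intro x hx
    obtain ⟨e, rfl⟩ := QuotientGroup.mk_surjective x
    have h1 : ρ (π e) = 1 := hx
    rw [← MonoidHom.mem_ker, hρ] at h1
    obtain ⟨k, hk'⟩ := Subgroup.mem_zpowers_iff.1 h1
    have h2 : (g ^ k)⁻¹ * e ∈ Subgroup.center E := hc (by
      rw [MonoidHom.mem_ker, map_mul, map_inv, map_zpow, hk', inv_mul_cancel])
    have h3 : (e : E ⧸ T) = (g : E ⧸ T) ^ k * (((g ^ k)⁻¹ * e : E) : E ⧸ T) := by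
      simp
    rw [h3]
    refine Subgroup.mul_mem _ (Subgroup.zpow_mem _ ?_ k) ?_
    · rw [Subgroup.mem_center_iff]
      intro y
      obtain ⟨h, rfl⟩ := QuotientGroup.mk_surjective y
      exact hcg h
    · rw [Subgroup.mem_center_iff]
      intro y
      obtain ⟨h, rfl⟩ := QuotientGroup.mk_surjective y
      have := Subgroup.mem_center_iff.1 h2 h
      exact congrArg (fun z : E => (z : E ⧸ T)) this
  · intro e; rfl
  · have h1 := card_comm (QuotientGroup.mk' T) (QuotientGroup.mk'_surjective T) ⊥ bot_le bot_le
    rw [Subgroup.relIndex_bot_left, Subgroup.relIndex_bot_left, QuotientGroup.ker_mk',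
      inf_eq_left.2 hTc] at h1
    rw [← h1]
    refine mul_dvd_mul_right ?_ _
    rw [hT, ← Subgroup.index_ker, ← Subgroup.index_comap_of_surjective D hπ]
    apply Subgroup.index_dvd_of_le
    intro e he
    exact hD e he

theorem normal_meets_center {p : ℕ} (hp : p.Prime) {G : Type*} [Group G] [Finite G]
    (hG : IsPGroup p G) (N : Subgroup G) [hN : N.Normal] (hN1 : N ≠ ⊥) :
    ∃ z ∈ N, z ∈ Subgroup.center G ∧ z ≠ 1 := by
  have : Fact p.Prime := ⟨hp⟩
  have h1 : p ∣ Nat.card N := by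
    rcases (hG.to_subgroup N).card_eq_or_dvd with h | h
    · exact absurd (Subgroup.card_eq_one.1 h) hN1
    · exact h
  have hG' : IsPGroup p (ConjAct G) := hG.of_equiv ConjAct.toConjAct
  have h2 : (1 : N) ∈ MulAction.fixedPoints (ConjAct G) N := by
    intro g; simp
  obtain ⟨b, hb, hb1⟩ := hG'.exists_fixed_point_of_prime_dvd_card_of_fixed_point N h1 h2
  refine ⟨b, b.2, ?_, ?_⟩
  · rw [Subgroup.mem_center_iff]
    intro g
    have h3 : ((ConjAct.toConjAct g • b : N) : G) = b := by rw [hb]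
    have h4 : g * (b : G) * g⁻¹ = b := h3
    exact mul_inv_eq_iff_eq_mul.1 h4
  · intro h; exact hb1 (Subtype.ext h.symm)

theorem normal_prime_central {p : ℕ} (hp : p.Prime) {G : Type*} [Group G] [Finite G]
    (hG : IsPGroup p G) (N : Subgroup G) [hN : N.Normal] (hN1 : Nat.card N = p) :
    N ≤ Subgroup.center G := by
  have : Fact p.Prime := ⟨hp⟩
  obtain ⟨z, hz, hzc, hz1⟩ := normal_meets_center hp hG N (by
    rintro rfl; rw [Subgroup.card_bot] at hN1; exact hp.one_lt.ne hN1)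
  intro x hx
  have := mem_zpowers_of_prime_card (g := (⟨z, hz⟩ : N)) (g' := ⟨x, hx⟩) hN1
    (by intro h; exact hz1 (congrArg Subtype.val h))
  obtain ⟨k, hk⟩ := this
  have : z ^ k = x := congrArg Subtype.val hk
  rw [← this]
  exact Subgroup.zpow_mem _ hzc k

theorem index_centralizer {Q : Type*} [Group Q] (N : Subgroup Q) (hN : N ≤ Subgroup.center Q)
    (y : Q) (hy : ∀ g : Q, ⁅g, y⁆ ∈ N) :
    ∃ D : Subgroup Q, (∀ d, d ∈ D → ⁅d, y⁆ = 1) ∧ D.Normal ∧ D.index ∣ Nat.card N := by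
  refine ⟨(commHom y fun g => hN (hy g)).ker, fun d hd => hd, inferInstance, ?_⟩
  rw [Subgroup.index_ker]
  apply Subgroup.card_dvd_of_le
  rintro _ ⟨g, rfl⟩
  exact hy g

theorem wiegold {p : ℕ} (hp : p.Prime) (m : ℕ) : ∀ {E Q : Type*} [Group E] [Group Q] (π : E →* Q)
    (_ : Function.Surjective π) (_ : π.ker ≤ Subgroup.center E) (_ : Nat.card Q = p ^ m),
    Nat.card (commutator E) ∣ p ^ (m * (m - 1) / 2) := by
  have : Fact p.Prime := ⟨hp⟩
  induction m with
  | zero =>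
    intro E Q _ _ π hπ hc hQ
    have : Subsingleton Q := (Nat.card_eq_one_iff_unique.1 (by simpa using hQ)).1
    have hall : ∀ x : E, x ∈ Subgroup.center E := fun x => hc (Subsingleton.elim _ _)
    have : commutator E = ⊥ := by
      rw [commutator_def, Subgroup.commutator_eq_bot_iff_le_centralizer]
      intro x _
      rw [Subgroup.coe_top, Subgroup.centralizer_univ]
      exact hall x
    rw [this]; simp
  | succ m ih =>
    intro E Q _ _ π hπ hc hQ
    have : Finite Q := Nat.finite_of_card_ne_zero (by rw [hQ]; exact pow_ne_zero _ hp.ne_zero)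
    have hQp : IsPGroup p Q := IsPGroup.of_card hQ
    have : Nontrivial Q := Finite.one_lt_card_iff_nontrivial.1 (by
      rw [hQ]; exact Nat.one_lt_pow (by omega) hp.one_lt)
    have := hQp.center_nontrivial
    have hdvd : p ∣ Nat.card (Subgroup.center Q) := by
      rcases (hQp.to_subgroup (Subgroup.center Q)).card_eq_or_dvd with h | h
      · have := Finite.one_lt_card (α := Subgroup.center Q); omega
      · exact h
    obtain ⟨⟨q, hqc⟩, hq⟩ := exists_prime_orderOf_dvd_card' p hdvd
    rw [Subgroup.orderOf_mk] at hq
    obtain ⟨g, rfl⟩ := hπ q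
    have hqc' := Subgroup.mem_center_iff.1 hqc
    have hn : (Subgroup.zpowers (π g)).Normal := by
      refine ⟨fun n hn h => ?_⟩
      have h1 : n ∈ Subgroup.center Q := (Subgroup.zpowers_le.2 hqc) hn
      rw [Subgroup.mem_center_iff.1 h1 h, mul_assoc, mul_inv_cancel, mul_one]; exact hn
    have hidx : (Subgroup.zpowers (π g)).index = p ^ m := by
      have h1 := (Subgroup.zpowers (π g)).card_mul_index
      rw [Nat.card_zpowers, hq, hQ, pow_succ'] at h1
      exact Nat.eq_of_mul_eq_mul_left hp.pos h1
    obtain ⟨T, hT, π', hs, hk, -, hd⟩ := step π hπ hc (QuotientGroup.mk' (Subgroup.zpowers (π g)))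
      (QuotientGroup.mk'_surjective _) g (QuotientGroup.ker_mk' _)
      (fun h => commutatorElement_eq_one_iff_mul_comm.2 (hqc' h)) (Subgroup.zpowers (π g)) (by
        intro e he
        obtain ⟨k, hk'⟩ := Subgroup.mem_zpowers_iff.1 he
        have h2 : (g ^ k)⁻¹ * e ∈ Subgroup.center E := hc (by
          rw [MonoidHom.mem_ker, map_mul, map_inv, map_zpow, hk', inv_mul_cancel])
        rw [commutatorElement_eq_one_iff_commute]
        have h3 : e = g ^ k * ((g ^ k)⁻¹ * e) := by group
        rw [h3]
        exact ((Commute.refl g).zpow_left k).mul_left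
          (Subgroup.mem_center_iff.1 h2 g).symm)
    have h4 := ih π' hs hk hidx
    refine hd.trans ?_
    rw [hidx]
    have h5 : (m + 1) * (m + 1 - 1) / 2 = m + m * (m - 1) / 2 := by
      rcases m with _ | m
      · simp
      · have : (m + 1 + 1) * (m + 1 + 1 - 1) = (m + 1) * 2 + (m + 1) * (m + 1 - 1) := by
          simp only [Nat.add_sub_cancel]; ring
        rw [this]; omega
    rw [h5, pow_add]
    exact mul_dvd_mul_left _ h4

theorem commute_comm {E : Type*} [Group E] (e c X : E) (hz : ⁅e, c⁆ ∈ Subgroup.center E)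
    (hu : Commute ⁅e, X⁆ c) (hu' : Commute ⁅e, X⁆ ⁅c, X⁆) : ⁅e, ⁅c, X⁆⁆ = 1 := by
  rw [commutatorElement_eq_one_iff_mul_comm, ← mul_inv_eq_iff_eq_mul]
  obtain ⟨z, hzz⟩ : ∃ z, z = ⁅e, c⁆ := ⟨_, rfl⟩
  obtain ⟨u, huu⟩ : ∃ u, u = ⁅e, X⁆ := ⟨_, rfl⟩
  rw [← hzz] at hz
  rw [← huu] at hu hu'
  have h1 : e * c * e⁻¹ = z * c := by rw [hzz, commutatorElement_def]; group
  have h2 : e * X * e⁻¹ = u * X := by rw [huu, commutatorElement_def]; group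
  have hz' := Subgroup.mem_center_iff.1 hz
  calc e * ⁅c, X⁆ * e⁻¹
      = (e * c * e⁻¹) * (e * X * e⁻¹) * (e * c * e⁻¹)⁻¹ * (e * X * e⁻¹)⁻¹ := by
        rw [commutatorElement_def]; group
    _ = (z * c) * (u * X) * (z * c)⁻¹ * (u * X)⁻¹ := by rw [h1, h2]
    _ = z * (c * u * X * c⁻¹) * z⁻¹ * (u * X)⁻¹ := by group
    _ = (c * u * X * c⁻¹) * (u * X)⁻¹ := by
        rw [← hz' (c * u * X * c⁻¹), mul_assoc _ z, mul_inv_cancel, mul_one]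
    _ = u * ⁅c, X⁆ * u⁻¹ := by
        rw [← hu.eq, commutatorElement_def]; group
    _ = ⁅c, X⁆ := by rw [hu'.eq, mul_assoc, mul_inv_cancel, mul_one]

theorem zpowers_eq_of_prime {p : ℕ} (hp : p.Prime) {G : Type*} [Group G] (N : Subgroup G)
    (hN : Nat.card N = p) (g : G) (hg : g ∈ N) (hg1 : g ≠ 1) : N = Subgroup.zpowers g := by
  have : Fact p.Prime := ⟨hp⟩
  refine le_antisymm (fun x hx => ?_) (Subgroup.zpowers_le.2 hg)
  have := mem_zpowers_of_prime_card (g := (⟨g, hg⟩ : N)) (g' := ⟨x, hx⟩) hN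
    (by intro h; exact hg1 (congrArg Subtype.val h))
  obtain ⟨k, hk⟩ := this
  exact ⟨k, congrArg Subtype.val hk⟩

theorem main {p n : ℕ} (hp : p.Prime) {E G : Type*} [Group E] [Group G] (π : E →* G)
    (hπ : Function.Surjective π) (hc : π.ker ≤ Subgroup.center E)
    (hG : Nat.card G = p ^ n) (hn : 5 ≤ n)
    (hG' : Nat.card (commutator G) = p ^ 2)
    (hnc : ¬ commutator G ≤ Subgroup.center G) :
    Nat.card (commutator E) ∣ p ^ (3 + (n - 2) * (n - 3) / 2) := by
  have : Fact p.Prime := ⟨hp⟩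
  have : Finite G := Nat.finite_of_card_ne_zero (by rw [hG]; exact pow_ne_zero _ hp.ne_zero)
  have hGp : IsPGroup p G := IsPGroup.of_card hG
  have hcm : ∀ {H : Type _} [Group H] (a b : H), ⁅a, b⁆ ∈ commutator H := fun a b =>
    Subgroup.commutator_mem_commutator (Subgroup.mem_top _) (Subgroup.mem_top _)
  have hcmE : ∀ (a b : E), ⁅a, b⁆ ∈ commutator E := fun a b =>
    Subgroup.commutator_mem_commutator (Subgroup.mem_top _) (Subgroup.mem_top _)
  obtain ⟨L, hL⟩ : ∃ L, L = commutator G ⊓ Subgroup.center G := ⟨_, rfl⟩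
  have hLn : L.Normal := by rw [hL]; infer_instance
  have hLc : L ≤ Subgroup.center G := hL ▸ inf_le_right
  have hLG : L ≤ commutator G := hL ▸ inf_le_left
  have hLcard : Nat.card L = p := by
    have h1 : Nat.card L ∣ p ^ 2 := hG' ▸ Subgroup.card_dvd_of_le hLG
    obtain ⟨i, hi, h2⟩ := (Nat.dvd_prime_pow hp).1 h1
    interval_cases i
    · exfalso
      obtain ⟨z, hz, hzc, hz1⟩ := normal_meets_center hp hGp (commutator G) (by
        intro h; rw [h, Subgroup.card_bot] at hG'
        exact (Nat.one_lt_pow (by norm_num) hp.one_lt).ne hG')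
      have h3 : L = ⊥ := Subgroup.card_eq_one.1 (by simpa using h2)
      have h4 : z ∈ L := hL ▸ ⟨hz, hzc⟩
      rw [h3, Subgroup.mem_bot] at h4
      exact hz1 h4
    · simpa using h2
    · exfalso
      have h3 : L = commutator G := Subgroup.eq_of_le_of_card_ge hLG (by rw [h2, hG'])
      exact hnc (h3 ▸ hLc)
  obtain ⟨y1, y2, hy⟩ : ∃ y1 y2 : G, ⁅y1, y2⁆ ∉ Subgroup.center G := by
    by_contra! h
    exact hnc (Subgroup.commutator_le.2 fun a _ b _ => h a b)
  obtain ⟨Y1, rfl⟩ := hπ y1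
  obtain ⟨Y2, rfl⟩ := hπ y2
  obtain ⟨x, hx⟩ : ∃ x : G, ⁅⁅π Y1, π Y2⁆, x⁆ ≠ 1 := by
    by_contra! h
    exact hy (Subgroup.mem_center_iff.2 fun g =>
      (commutatorElement_eq_one_iff_mul_comm.1 (h g)).symm)
  obtain ⟨X, rfl⟩ := hπ x
  obtain ⟨c, hcdef⟩ : ∃ c, c = ⁅Y1, Y2⁆ := ⟨_, rfl⟩
  obtain ⟨t, htdef⟩ : ∃ t, t = ⁅c, X⁆ := ⟨_, rfl⟩
  have hπc : π c = ⁅π Y1, π Y2⁆ := by rw [hcdef, map_commutatorElement]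
  have hπt : π t = ⁅π c, π X⁆ := by rw [htdef, map_commutatorElement]
  rw [← hπc] at hy hx
  rw [← hπt] at hx
  have hcE : c ∈ commutator E := hcdef ▸ hcmE _ _
  have htE : t ∈ commutator E := htdef ▸ hcmE _ _
  -- the quotient Q = G / L
  have hQ' : Nat.card (commutator (G ⧸ L)) = p := by
    have h1 := card_comm (QuotientGroup.mk' L) (QuotientGroup.mk'_surjective L) ⊥ bot_le bot_le
    rw [Subgroup.relIndex_bot_left, Subgroup.relIndex_bot_left, QuotientGroup.ker_mk',
      inf_eq_left.2 hLG, hLcard, hG', sq] at h1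
    exact Nat.eq_of_mul_eq_mul_left hp.pos h1
  have hQcard : Nat.card (G ⧸ L) = p ^ (n - 1) := by
    have h1 := L.card_eq_card_quotient_mul_card_subgroup
    obtain ⟨k, rfl⟩ : ∃ k, n = k + 1 := ⟨n - 1, by omega⟩
    rw [hG, hLcard, pow_succ] at h1
    exact (Nat.eq_of_mul_eq_mul_right hp.pos h1).symm
  have hQc : commutator (G ⧸ L) ≤ Subgroup.center (G ⧸ L) :=
    normal_prime_central hp (hGp.to_quotient L) _ hQ'
  have hcQ : ((π c : G) : G ⧸ L) ∈ commutator (G ⧸ L) := by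
    rw [hπc]; exact hcm (π Y1 : G ⧸ L) (π Y2 : G ⧸ L)
  have hQz : commutator (G ⧸ L) = Subgroup.zpowers ((π c : G) : G ⧸ L) := by
    refine zpowers_eq_of_prime hp _ hQ' _ hcQ ?_
    intro h
    exact hy (hLc ((QuotientGroup.eq_one_iff _).1 h))
  have hcL : ∀ g : G, ⁅g, π c⁆ ∈ L := by
    intro g
    rw [← QuotientGroup.eq_one_iff]
    have : ⁅(g : G ⧸ L), (π c : G ⧸ L)⁆ = 1 :=
      commutatorElement_eq_one_iff_mul_comm.2 (Subgroup.mem_center_iff.1 (hQc hcQ) _)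
    exact this
  have htL : π t ∈ L := by
    rw [hπt, ← commutatorElement_inv]
    exact L.inv_mem (hcL _)
  have hLz : L = Subgroup.zpowers (π t) := zpowers_eq_of_prime hp _ hLcard _ htL hx
  have htz : ∀ h : G, ⁅h, π t⁆ = 1 := fun h =>
    commutatorElement_eq_one_iff_mul_comm.2 (Subgroup.mem_center_iff.1 (hLc htL) h)
  have htk : ∀ h : E, ⁅h, t⁆ ∈ Subgroup.center E := fun h => hc (by
    rw [MonoidHom.mem_ker, map_commutatorElement, htz])
  have hut : ∀ u ∈ commutator E, Commute u t := by
    have h1 : commutator E ≤ (commHom t htk).ker := by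
      refine Subgroup.commutator_le.2 fun a _ b _ => ?_
      rw [MonoidHom.mem_ker, map_commutatorElement, commutatorElement_eq_one_iff_mul_comm]
      exact Subgroup.mem_center_iff.1 (htk b) _
    intro u hu
    exact commutatorElement_eq_one_iff_commute.1 (h1 hu)
  have huc : ∀ u ∈ commutator E, Commute u c := by
    intro u hu
    have h1 : ((π u : G) : G ⧸ L) ∈ commutator (G ⧸ L) := by
      have := Subgroup.mem_map_of_mem ((QuotientGroup.mk' L).comp π) hu
      rw [commutator_def, Subgroup.map_commutator] at this
      exact Subgroup.commutator_mono le_top le_top this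
    rw [hQz] at h1
    obtain ⟨k, hk⟩ := Subgroup.mem_zpowers_iff.1 h1
    have h2 : (π c ^ k)⁻¹ * π u ∈ L := by
      rw [← QuotientGroup.eq_one_iff, QuotientGroup.mk_mul, QuotientGroup.mk_inv,
        QuotientGroup.mk_zpow, hk, inv_mul_cancel]
    rw [hLz] at h2
    obtain ⟨j, hj⟩ := Subgroup.mem_zpowers_iff.1 h2
    have h3 : (t ^ j)⁻¹ * ((c ^ k)⁻¹ * u) ∈ Subgroup.center E := hc (by
      rw [MonoidHom.mem_ker, map_mul, map_mul, map_inv, map_inv, map_zpow, map_zpow, hj,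
        inv_mul_cancel])
    have h4 : u = c ^ k * (t ^ j * ((t ^ j)⁻¹ * ((c ^ k)⁻¹ * u))) := by group
    rw [h4]
    refine ((Commute.refl c).zpow_left k).mul_left (Commute.mul_left ?_ ?_)
    · exact (hut c hcE).symm.zpow_left j
    · exact (Subgroup.mem_center_iff.1 h3 c).symm
  -- first step
  obtain ⟨D1, hD1, -, hD1i⟩ := index_centralizer L hLc (π c) hcL
  obtain ⟨T, hT, π1, hs1, hk1, hcomp, hd1⟩ := step π hπ hc (QuotientGroup.mk' L)
    (QuotientGroup.mk'_surjective L) t (by rw [QuotientGroup.ker_mk', ← hLz]) htz D1 (by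
      intro e he
      rw [htdef]
      refine commute_comm e c X (hc ?_) (huc _ (hcmE _ _)) ?_
      · rw [MonoidHom.mem_ker, map_commutatorElement]; exact hD1 _ he
      · rw [← htdef]; exact hut _ (hcmE _ _))
  -- second step
  have hπ1 : ∀ e : E, π1 (e : E ⧸ T) = ((π e : G) : G ⧸ L) := hcomp
  obtain ⟨Da, hDa, hDan, hDai⟩ := index_centralizer (commutator (G ⧸ L)) hQc
    (π Y1 : G ⧸ L) (fun g => hcm _ _)
  obtain ⟨Db, hDb, hDbn, hDbi⟩ := index_centralizer (commutator (G ⧸ L)) hQc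
    (π Y2 : G ⧸ L) (fun g => hcm _ _)
  have hDab : (Da ⊓ Db).index ∣ p * p := by
    rw [hQ'] at hDai hDbi
    rw [← Subgroup.relIndex_mul_index (inf_le_right : Da ⊓ Db ≤ Db), Subgroup.inf_relIndex_right]
    exact mul_dvd_mul ((Subgroup.relIndex_dvd_index_of_normal _ _).trans hDai) hDbi
  have hcT : ((c : E) : E ⧸ T) = ⁅(Y1 : E ⧸ T), (Y2 : E ⧸ T)⁆ := by rw [hcdef]; rfl
  obtain ⟨T2, hT2, π2, hs2, hk2, -, hd2⟩ := step π1 hs1 hk1 (QuotientGroup.mk' (commutator (G ⧸ L)))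
    (QuotientGroup.mk'_surjective _) (c : E ⧸ T) (by rw [QuotientGroup.ker_mk', hπ1, hQz])
    (by
      intro h
      rw [hπ1]
      exact commutatorElement_eq_one_iff_mul_comm.2 (Subgroup.mem_center_iff.1 (hQc hcQ) _))
    (Da ⊓ Db) (by
      intro e he
      have ha : ⁅e, (Y1 : E ⧸ T)⁆ ∈ Subgroup.center (E ⧸ T) := hk1 (by
        rw [MonoidHom.mem_ker, map_commutatorElement, hπ1]; exact hDa _ he.1)
      have hb : ⁅e, (Y2 : E ⧸ T)⁆ ∈ Subgroup.center (E ⧸ T) := hk1 (by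
        rw [MonoidHom.mem_ker, map_commutatorElement, hπ1]; exact hDb _ he.2)
      rw [hcT]
      exact commute_comm _ _ _ ha (Subgroup.mem_center_iff.1 hb _).symm
        (Subgroup.mem_center_iff.1 hb _).symm)
  have hQ2 : Nat.card ((G ⧸ L) ⧸ commutator (G ⧸ L)) = p ^ (n - 2) := by
    have h1 := (commutator (G ⧸ L)).card_eq_card_quotient_mul_card_subgroup
    rw [hQcard, hQ', show n - 1 = (n - 2) + 1 by omega, pow_succ] at h1
    exact (Nat.eq_of_mul_eq_mul_right hp.pos h1).symm
  have hw := wiegold hp (n - 2) π2 hs2 hk2 hQ2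
  rw [hLcard] at hD1i
  have : p ^ (3 + (n - 2) * (n - 3) / 2) = p * (p * p * p ^ ((n - 2) * (n - 2 - 1) / 2)) := by
    rw [show n - 2 - 1 = n - 3 by omega, pow_add]; ring
  rw [this]
  exact hd1.trans (mul_dvd_mul hD1i (hd2.trans (mul_dvd_mul hDab hw)))

theorem comm_of_mem {F : Type*} [Group F] (N R : Subgroup F) [N.Normal]
    (hN : ⁅(⊤ : Subgroup F), R⁆ ≤ N) (v w : F) (hw : w ∈ R) :
    (v : F ⧸ N) * (w : F ⧸ N) = w * v := by
  have h4 : ⁅v, w⁆ ∈ N := hN (Subgroup.commutator_mem_commutator (Subgroup.mem_top _) hw)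
  have h5 := (QuotientGroup.eq_one_iff _).2 h4
  have h6 : ⁅(v : F ⧸ N), (w : F ⧸ N)⁆ = 1 := h5
  exact commutatorElement_eq_one_iff_mul_comm.1 h6

end SchurAux

/-- **Lemma 7.** There is no `p`-group of order `p^n` (`n ≥ 5`) with `s(G) = 2`,
`|G'| = p²` and `G'` not contained in the center of `G`. -/
theorem no_s_eq_two_of_commutator_not_central {p n : ℕ} (hp : p.Prime)
    {G : Type*} [Group G] (hG : Nat.card G = p ^ n) (hn : 5 ≤ n)
    (hG' : Nat.card (commutator G) = p ^ 2)
    (hnc : ¬ commutator G ≤ Subgroup.center G) :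
    Nat.card (SchurMultiplier G) ≠ p ^ ((n - 1) * (n - 2) / 2 - 1) := by
  intro hM
  set f : FreeGroup G →* G := FreeGroup.lift (id : G → G) with hf
  have hfs : Function.Surjective f := fun g => ⟨FreeGroup.of g, by simp [hf]⟩
  obtain ⟨N, hN⟩ : ∃ N, N = ⁅(⊤ : Subgroup (FreeGroup G)), f.ker⁆ := ⟨_, rfl⟩
  have hNn : N.Normal := by rw [hN]; infer_instance
  have hNk : N ≤ f.ker := hN ▸ Subgroup.commutator_le_right _ _
  have hNc : N ≤ commutator (FreeGroup G) := by
    rw [hN]; exact Subgroup.commutator_mono le_rfl le_top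
  have hM' : N.relIndex (f.ker ⊓ commutator (FreeGroup G)) = p ^ ((n - 1) * (n - 2) / 2 - 1) := by
    rw [← hM, hN]; rfl
  have h1 := SchurAux.card_comm f hfs N hNc hNk
  have h2 := SchurAux.card_comm (QuotientGroup.mk' N) (QuotientGroup.mk'_surjective N) N hNc
    (QuotientGroup.ker_mk' N).ge
  rw [QuotientGroup.ker_mk', inf_eq_left.2 hNc, Subgroup.relIndex_self, one_mul, ← h1, hM', hG',
    ← pow_add] at h2
  have h3 := SchurAux.main hp (QuotientGroup.lift N f hNk) (fun g => by
      obtain ⟨w, hw⟩ := hfs g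
      exact ⟨(w : FreeGroup G ⧸ N), hw⟩) (by
      intro x hx
      obtain ⟨w, rfl⟩ := QuotientGroup.mk_surjective x
      have hw : w ∈ f.ker := hx
      rw [Subgroup.mem_center_iff]
      intro y
      obtain ⟨v, rfl⟩ := QuotientGroup.mk_surjective y
      exact SchurAux.comm_of_mem N f.ker hN.ge v w hw)
    hG hn hG' hnc
  rw [h2] at h3
  have h4 := (Nat.pow_dvd_pow_iff_le_right hp.one_lt).1 h3
  obtain ⟨k, rfl⟩ : ∃ k, n = k + 5 := ⟨n - 5, by omega⟩
  have h5 : (k + 5 - 1) * (k + 5 - 2) = (k + 5 - 2) * (k + 5 - 3) + (k + 3) * 2 := by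
    simp only [show k + 5 - 1 = k + 4 by omega, show k + 5 - 2 = k + 3 by omega,
      show k + 5 - 3 = k + 2 by omega]
    ring
  rw [h5] at h4
  omega
end

section
/- Let p be a prime and G a p-group of order p^n with n ≥ 5, |G'| = p^2, and |M(G)| = p^{(n-1)(n-2)/2 - 1}. Then p ≠ 2, n = 6, and G is isomorphic to ℤ_p × K, where K is a semidirect product (ℤ_p)^4 ⋊_θ ℤ_p for some homomorphism θ : ℤ_p → Aut((ℤ_p)^4), with K having derived subgroup of order p^2 and center of order p^2. -/
open scoped commutatorElement

/-- central extension -/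
structure CExt {H : Type*} {G : Type*} [Group H] [Group G] (π : H →* G) : Prop where
  surj : Function.Surjective π
  cen : ∀ a, π a = 1 → ∀ y, a * y = y * a

theorem card_map_mul {H : Type*} {G : Type*} [Group H] [Group G] (f : H →* G) (K : Subgroup H) :
    Nat.card K = Nat.card (K.map f) * Nat.card (f.ker ⊓ K : Subgroup H) := by
  have h := Subgroup.card_eq_card_quotient_mul_card_subgroup (f.comp K.subtype).ker
  rw [h]
  congr 1
  · rw [Nat.card_congr (QuotientGroup.quotientKerEquivRange (f.comp K.subtype)).toEquiv,
      MonoidHom.range_comp, Subgroup.range_subtype]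
  · refine Nat.card_congr (Equiv.ofBijective (fun x => ⟨x.1.1, x.2, x.1.2⟩) ⟨?_, ?_⟩)
    · intro x y h
      exact Subtype.ext (Subtype.ext (congrArg (fun z : (f.ker ⊓ K : Subgroup H) => (z : H)) h))
    · rintro ⟨x, hx, hx'⟩
      exact ⟨⟨⟨x, hx'⟩, hx⟩, rfl⟩

theorem map_comm_surj {H : Type*} {G : Type*} [Group H] [Group G] {f : H →* G}
    (hf : Function.Surjective f) : (commutator H).map f = commutator G := by
  rw [commutator_def, Subgroup.map_commutator, ← MonoidHom.range_eq_map,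
    MonoidHom.range_eq_top.mpr hf, commutator_def]

theorem map_g3_surj {H : Type*} {G : Type*} [Group H] [Group G] {f : H →* G}
    (hf : Function.Surjective f) :
    (⁅commutator H, (⊤ : Subgroup H)⁆).map f = ⁅commutator G, (⊤ : Subgroup G)⁆ := by
  rw [Subgroup.map_commutator, map_comm_surj hf, ← MonoidHom.range_eq_map,
    MonoidHom.range_eq_top.mpr hf]

/-- Hopf -/
theorem hopf_ext (G : Type u) [Group G] : ∃ (H : Type u) (_ : Group H) (π : H →* G),
    CExt π ∧ Nat.card (π.ker ⊓ commutator H : Subgroup H) = Nat.card (SchurMultiplier G) ∧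
    ∀ (E : Type u) (_ : Group E) (ρ : E →* G), CExt ρ → ∃ ψ : H →* E, ∀ h, ρ (ψ h) = π h := by
  let F := FreeGroup G
  let R := presentationKernel G
  let φ : F →* G := FreeGroup.lift id
  have hRn : R.Normal := by unfold R presentationKernel; infer_instance
  let N : Subgroup F := ⁅(⊤ : Subgroup F), R⁆
  have hN : N.Normal := by unfold N; infer_instance
  have hNR : N ≤ R := Subgroup.commutator_le_right _ _
  let π : F ⧸ N →* G := QuotientGroup.lift N φ (fun x hx => hNR hx)
  have hπ : ∀ x : F, π (x : F ⧸ N) = φ x := fun x => rfl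
  have hφs : Function.Surjective φ := fun g => ⟨FreeGroup.of g, FreeGroup.lift_apply_of⟩
  refine ⟨F ⧸ N, inferInstance, π, ⟨?_, ?_⟩, ?_, ?_⟩
  · intro g
    obtain ⟨x, hx⟩ := hφs g
    exact ⟨x, hx⟩
  · intro a ha y
    obtain ⟨a, rfl⟩ := QuotientGroup.mk_surjective a
    obtain ⟨y, rfl⟩ := QuotientGroup.mk_surjective y
    have : ⁅y, a⁆ ∈ N := Subgroup.commutator_mem_commutator (Subgroup.mem_top _) ha
    rw [← QuotientGroup.eq_one_iff] at this
    have h2 : ⁅(y : F ⧸ N), (a : F ⧸ N)⁆ = 1 := this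
    rw [commutatorElement_eq_one_iff_mul_comm] at h2
    exact h2.symm
  · have h1 : (π.ker ⊓ commutator (F ⧸ N) : Subgroup (F ⧸ N))
        = (R ⊓ commutator F).map (QuotientGroup.mk' N) := by
      rw [← map_comm_surj (QuotientGroup.mk'_surjective N)]
      ext x
      constructor
      · rintro ⟨hx, y, hy, rfl⟩
        exact ⟨y, ⟨hx, hy⟩, rfl⟩
      · rintro ⟨y, ⟨h1, h2⟩, rfl⟩
        exact ⟨h1, y, h2, rfl⟩
    rw [h1]
    unfold SchurMultiplier
    have := QuotientGroup.quotientKerEquivRange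
      ((QuotientGroup.mk' N).comp (R ⊓ commutator F).subtype)
    have h3 : ((QuotientGroup.mk' N).comp (R ⊓ commutator F).subtype).range =
      (R ⊓ commutator F).map (QuotientGroup.mk' N) := by
      rw [MonoidHom.range_comp, Subgroup.range_subtype]
    have h4 : ((QuotientGroup.mk' N).comp (R ⊓ commutator F).subtype).ker =
      N.subgroupOf (R ⊓ commutator F) := by
      rw [← MonoidHom.comap_ker, QuotientGroup.ker_mk']; rfl
    rw [← h3, ← Nat.card_congr this.toEquiv, h4]
  · intro E _ ρ hρ
    let s : F →* E := FreeGroup.lift (fun g => (hρ.surj g).choose)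
    have hs : ∀ x, ρ (s x) = φ x := by
      intro x
      have : ρ.comp s = φ := by
        apply FreeGroup.ext_hom
        intro g
        simp only [MonoidHom.comp_apply, s, φ, FreeGroup.lift_apply_of, id]
        exact (hρ.surj g).choose_spec
      exact DFunLike.congr_fun this x
    have hk : N ≤ s.ker := by
      rw [Subgroup.commutator_le]
      intro y _ r hr
      rw [MonoidHom.mem_ker, map_commutatorElement, commutatorElement_eq_one_iff_mul_comm]
      refine (hρ.cen (s r) ?_ (s y)).symm
      rw [hs]; exact hr
    refine ⟨QuotientGroup.lift N s hk, ?_⟩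
    intro h
    obtain ⟨x, rfl⟩ := QuotientGroup.mk_surjective h
    exact hs x

theorem CExt.card_comm {H : Type*} {G : Type*} [Group H] [Group G] {π : H →* G} (h : CExt π) :
    Nat.card (commutator H) = Nat.card (commutator G) *
      Nat.card (π.ker ⊓ commutator H : Subgroup H) := by
  rw [card_map_mul π, map_comm_surj h.surj]

/-- quotient of central extension -/
theorem CExt.quot {H : Type*} {G : Type*} [Group H] [Group G] {π : H →* G} (h : CExt π)
    (N : Subgroup H) [N.Normal] (K : Subgroup G) [K.Normal] (hNK : N ≤ K.comap π)
    (hN : N ≤ commutator H) (hKN : ∀ x, π x ∈ K → ∀ y, ⁅x, y⁆ ∈ N) :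
    ∃ ρ : H ⧸ N →* G ⧸ K, CExt ρ ∧ (∀ x : H, ρ x = (π x : G ⧸ K)) ∧
    Nat.card (commutator H) = Nat.card N * Nat.card (commutator (H ⧸ N)) := by
  refine ⟨QuotientGroup.map N K π hNK, ⟨?_, ?_⟩, fun x => rfl, ?_⟩
  · intro g
    obtain ⟨g, rfl⟩ := QuotientGroup.mk_surjective g
    obtain ⟨x, rfl⟩ := h.surj g
    exact ⟨x, rfl⟩
  · intro a ha y
    obtain ⟨a, rfl⟩ := QuotientGroup.mk_surjective a
    obtain ⟨y, rfl⟩ := QuotientGroup.mk_surjective y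
    have h1 : π a ∈ K := (QuotientGroup.eq_one_iff _).mp ha
    have := hKN a h1 y
    rw [← QuotientGroup.eq_one_iff] at this
    have h2 : ⁅(a : H ⧸ N), (y : H ⧸ N)⁆ = 1 := this
    rwa [commutatorElement_eq_one_iff_mul_comm] at h2
  · rw [card_map_mul (QuotientGroup.mk' N), map_comm_surj (QuotientGroup.mk'_surjective N),
      QuotientGroup.ker_mk', inf_eq_left.mpr hN, mul_comm]

theorem CExt.comm_ker {H : Type*} {G : Type*} [Group H] [Group G] {π : H →* G} (_h : CExt π)
    {x : H} (hx : ∀ g, π x * g = g * π x) (y : H) : π ⁅x, y⁆ = 1 := by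
  rw [map_commutatorElement, commutatorElement_eq_one_iff_mul_comm]; exact hx _

theorem CExt.comm_mul {H : Type*} {G : Type*} [Group H] [Group G] {π : H →* G} (h : CExt π)
    {x : H} (hx : ∀ g, π x * g = g * π x) (y z : H) : ⁅x, y * z⁆ = ⁅x, y⁆ * ⁅x, z⁆ := by
  have h1 := h.cen _ (h.comm_ker hx z) (y⁻¹)
  have : ⁅x, y * z⁆ = ⁅x, y⁆ * (y * (⁅x, z⁆ * y⁻¹)) := by
    simp [commutatorElement_def, mul_assoc]
  rw [this, h1]; simp

/-- commutator with an element central mod kernel -/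
def cHom {H : Type*} {G : Type*} [Group H] [Group G] {π : H →* G} (h : CExt π)
    {x : H} (hx : ∀ g, π x * g = g * π x) : H →* H where
  toFun y := ⁅x, y⁆
  map_one' := by simp
  map_mul' := h.comm_mul hx

theorem cHom_apply {H : Type*} {G : Type*} [Group H] [Group G] {π : H →* G} (h : CExt π)
    {x : H} (hx : ∀ g, π x * g = g * π x) (y : H) : cHom h hx y = ⁅x, y⁆ := rfl

theorem cHom_range_le {H : Type*} {G : Type*} [Group H] [Group G] {π : H →* G} (h : CExt π)
    {x : H} (hx : ∀ g, π x * g = g * π x) : (cHom h hx).range ≤ π.ker := by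
  rintro _ ⟨y, rfl⟩
  exact h.comm_ker hx y

theorem cHom_range_normal {H : Type*} {G : Type*} [Group H] [Group G] {π : H →* G} (h : CExt π)
    {x : H} (hx : ∀ g, π x * g = g * π x) : (cHom h hx).range.Normal := by
  constructor
  intro n hn g
  have := h.cen n (cHom_range_le h hx hn) g
  rw [← this]; simpa using hn

theorem cHom_range_comm {H : Type*} {G : Type*} [Group H] [Group G] {π : H →* G} (h : CExt π)
    {x : H} (hx : ∀ g, π x * g = g * π x) : (cHom h hx).range ≤ commutator H := by
  rintro _ ⟨y, rfl⟩
  exact Subgroup.commutator_mem_commutator (Subgroup.mem_top _) (Subgroup.mem_top _)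

/-- elements with zero commutators -/
theorem cHom_comm {H : Type*} {G : Type*} [Group H] [Group G] {π : H →* G} (h : CExt π)
    {x : H} (hx : ∀ g, π x * g = g * π x) {y : H} (hy : π y ∈ commutator G) : ⁅x, y⁆ = 1 := by
  rw [← map_comm_surj h.surj] at hy
  obtain ⟨z, hz, hzy⟩ := hy
  have h1 : commutator H ≤ (cHom h hx).ker := by
    rw [commutator_def, Subgroup.commutator_le]
    intro a _ b _
    rw [MonoidHom.mem_ker, map_commutatorElement, commutatorElement_eq_one_iff_mul_comm]
    exact h.cen _ (h.comm_ker hx _) _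
  have h2 : ⁅x, z⁆ = 1 := h1 hz
  have h3 : ⁅x, y * z⁻¹⁆ = 1 := by
    rw [commutatorElement_eq_one_iff_mul_comm]
    exact (h.cen _ (by simp [hzy]) _).symm
  have := h.comm_mul hx (y * z⁻¹) z
  rw [h2, h3] at this
  simpa using this

theorem cHom_card {H : Type*} {G : Type*} [Group H] [Group G] {π : H →* G} (h : CExt π)
    {x : H} (hx : ∀ g, π x * g = g * π x) (K : Subgroup G) (hK : K.index ≠ 0)
    (h2 : ∀ y, π y ∈ K → ⁅x, y⁆ = 1) : Nat.card (cHom h hx).range ≤ K.index := by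
  rw [← Subgroup.index_ker, ← Subgroup.index_comap_of_surjective K h.surj]
  apply Nat.le_of_dvd
  · rw [Subgroup.index_comap_of_surjective K h.surj]; omega
  · apply Subgroup.index_dvd_of_le
    intro y hy
    exact h2 y hy

theorem tri_arith (m : ℕ) : m + m * (m - 1) / 2 = (m + 1) * m / 2 := by
  have := Finset.sum_range_id_mul_two m
  have h2 := Finset.sum_range_id_mul_two (m + 1)
  rw [Finset.sum_range_succ] at h2
  simp only [Nat.add_sub_cancel] at h2
  omega

theorem tri_mono {a b : ℕ} (h : a ≤ b) : a * (a - 1) / 2 ≤ b * (b - 1) / 2 := by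
  gcongr

theorem CExt.peel {H : Type*} {G : Type*} [Group H] [Group G] {π : H →* G} (h : CExt π)
    {x : H} (hx : ∀ g, π x * g = g * π x) [(cHom h hx).range.Normal]
    [(Subgroup.zpowers (π x)).Normal] :
    ∃ ρ : H ⧸ (cHom h hx).range →* G ⧸ (Subgroup.zpowers (π x)), CExt ρ ∧
      (∀ x, ρ (QuotientGroup.mk x) = QuotientGroup.mk (π x)) ∧
    Nat.card (commutator H) = Nat.card (cHom h hx).range *
      Nat.card (commutator (H ⧸ (cHom h hx).range)) := by
  apply h.quot
  · intro y hy
    have := cHom_range_le h hx hy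
    rw [Subgroup.mem_comap, show π y = 1 from this]
    exact one_mem _
  · exact cHom_range_comm h hx
  · rintro y ⟨k, hk⟩ z
    have h1 : π (y * (x ^ k)⁻¹) = 1 := by
      simp only at hk
      rw [map_mul, map_inv, map_zpow, hk]; simp
    have h2 := h.cen _ h1
    have h3 : ⁅y, z⁆ = ⁅x ^ k, z⁆ := by
      obtain ⟨w, hw⟩ : ∃ w, w = y * (x ^ k)⁻¹ := ⟨_, rfl⟩
      rw [← hw] at h2
      have : y = w * x ^ k := by rw [hw]; simp
      rw [this]
      simp only [commutatorElement_def, mul_inv_rev]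
      have h5 := h2 (x ^ k * z * (x ^ k)⁻¹)
      calc w * x ^ k * z * ((x ^ k)⁻¹ * w⁻¹) * z⁻¹
          = w * (x ^ k * z * (x ^ k)⁻¹) * w⁻¹ * z⁻¹ := by group
        _ = _ := by rw [h5]; group
    rw [h3]
    have h4 : ⁅x ^ k, z⁆ = ⁅z, x ^ k⁆⁻¹ := by simp
    have h6 : ⁅x ^ k, z⁆ = ⁅x, z⁆ ^ k := by
      have e1 : z * x * z⁻¹ = ⁅x, z⁆⁻¹ * x := by simp [commutatorElement_def, mul_assoc]
      have hc := h.cen _ (h.comm_ker hx z)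
      have e2 : z * x ^ k * z⁻¹ = (⁅x, z⁆⁻¹ * x) ^ k := by
        rw [← e1, conj_zpow]
      have e3 : (⁅x, z⁆⁻¹ * x) ^ k = ⁅x, z⁆⁻¹ ^ k * x ^ k := by
        apply Commute.mul_zpow
        exact Commute.inv_left (hc x)
      have : ⁅x ^ k, z⁆ = x ^ k * (z * x ^ k * z⁻¹)⁻¹ := by
        simp [commutatorElement_def, mul_assoc]
      rw [this, e2, e3, inv_zpow]
      group
    rw [h6]
    exact Subgroup.zpow_mem (cHom h hx).range ⟨z, rfl⟩ k

theorem zpowers_normal_of_central {G : Type*} [Group G] {x : G} (hx : ∀ g, x * g = g * x) :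
    (Subgroup.zpowers x).Normal := by
  constructor
  rintro _ ⟨k, rfl⟩ g
  have : Commute (x ^ k) g := Commute.zpow_left (hx g) k
  simp only
  rw [← this.eq]; simp

theorem card_quot_zpowers {G : Type*} [Group G] {p m k : ℕ} (hp : p.Prime)
    (hG : Nat.card G = p ^ m) {x : G} (hk : orderOf x = p ^ k) :
    k ≤ m ∧ Nat.card (G ⧸ Subgroup.zpowers x) = p ^ (m - k) := by
  have h1 := Subgroup.card_eq_card_quotient_mul_card_subgroup (Subgroup.zpowers x)
  rw [Nat.card_zpowers, hG, hk] at h1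
  have : k ≤ m := by
    apply (Nat.pow_dvd_pow_iff_le_right hp.one_lt).mp
    exact Dvd.intro_left _ h1.symm
  refine ⟨this, ?_⟩
  rw [← Nat.sub_add_cancel this, pow_add] at h1
  exact (Nat.eq_of_mul_eq_mul_right (Nat.pow_pos hp.pos) h1).symm

theorem green_step {H : Type u} {G : Type v} [Group H] [Group G] {π : H →* G} (h : CExt π)
    {p m k : ℕ} (hp : p.Prime) (hG : Nat.card G = p ^ m)
    {x : G} (hx : ∀ g, x * g = g * x) (hk : orderOf x = p ^ k) (hk0 : 1 ≤ k)
    (ih : ∀ (H' : Type u) (G' : Type v) [Group H'] [Group G'] (π : H' →* G'), CExt π →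
      ∀ m', m' < m → Nat.card G' = p ^ m' → Nat.card (commutator H') ≤ p ^ (m' * (m' - 1) / 2)) :
    Nat.card (commutator H) ≤ p ^ ((m - k + 1) * (m - k) / 2) := by
  obtain ⟨x, rfl⟩ := h.surj x
  have i1 := cHom_range_normal h hx
  have i2 := zpowers_normal_of_central hx
  obtain ⟨hkm, hc⟩ := card_quot_zpowers hp hG hk
  obtain ⟨ρ, hρ, -, hcard⟩ := h.peel hx
  have h1 := ih _ _ ρ hρ (m - k) (by omega) hc
  have h2 : Nat.card (cHom h hx).range ≤ p ^ (m - k) := by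
    rw [← hc]
    apply cHom_card h hx (Subgroup.zpowers (π x))
    · rw [Subgroup.index, hc]; exact (Nat.pow_pos hp.pos).ne'
    · rintro y ⟨j, hj⟩
      simp only at hj
      rw [← map_zpow] at hj
      have h3 := h.cen (y * (x ^ j)⁻¹) (by simp [hj])
      have := h.comm_mul hx (y * (x ^ j)⁻¹) (x ^ j)
      rw [inv_mul_cancel_right] at this
      rw [this, (commutatorElement_eq_one_iff_mul_comm).mpr (h3 x).symm,
        (commutatorElement_eq_one_iff_mul_comm).mpr]
      · simp
      · exact (Commute.zpow_right (Commute.refl x) j)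
  rw [hcard, ← tri_arith, pow_add]
  exact Nat.mul_le_mul h2 h1

theorem green {p : ℕ} (hp : p.Prime) (m : ℕ) : ∀ (H : Type u) (G : Type v) [Group H] [Group G]
    (π : H →* G), CExt π → Nat.card G = p ^ m →
    Nat.card (commutator H) ≤ p ^ (m * (m - 1) / 2) := by
  induction m using Nat.strong_induction_on with
  | _ m ih =>
  intro H G _ _ π h hG
  rcases Nat.eq_zero_or_pos m with rfl | hm
  · have : Subsingleton G := by
      have := (Nat.card_eq_one_iff_unique.mp (by simpa using hG)).1
      exact this
    have : commutator H = ⊥ := by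
      rw [commutator_def, eq_bot_iff, Subgroup.commutator_le]
      intro a _ b _
      rw [Subgroup.mem_bot, commutatorElement_eq_one_iff_mul_comm]
      exact h.cen a (Subsingleton.elim _ _) b
    rw [this]; simp
  · have : Fact p.Prime := ⟨hp⟩
    have hpG : IsPGroup p G := IsPGroup.of_card hG
    have : Finite G := Nat.finite_of_card_ne_zero (by rw [hG]; exact (Nat.pow_pos hp.pos).ne')
    have : Nontrivial G := by
      rw [← Finite.one_lt_card_iff_nontrivial, hG]
      exact Nat.one_lt_pow hm.ne' hp.one_lt
    have := hpG.center_nontrivial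
    obtain ⟨⟨x, hx⟩, hx1⟩ := exists_ne (1 : Subgroup.center G)
    obtain ⟨k, hk⟩ := (IsPGroup.iff_orderOf.mp hpG) x
    have hk1 : 1 ≤ k := by
      rcases Nat.eq_zero_or_pos k with rfl | hk0
      · exfalso; apply hx1
        rw [pow_zero, orderOf_eq_one_iff] at hk
        exact Subtype.ext hk
      · exact hk0
    have hxc : ∀ g, x * g = g * x := fun g => (Subgroup.mem_center_iff.mp hx g).symm
    refine (green_step h hp hG hxc hk hk1 ?_).trans ?_
    · intro H' G' _ _ π' h' m' hm' hG'
      exact ih m' hm' H' G' π' h' hG'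
    · apply Nat.pow_le_pow_right hp.pos
      have := (card_quot_zpowers hp hG hk).1
      have h2 := tri_mono (a := m - k + 1) (b := m) (by omega)
      simpa using h2

theorem green_nonelem {p m : ℕ} (hp : p.Prime) {H : Type u} {G : Type v} [Group H] [Group G]
    {π : H →* G} (h : CExt π) (hG : Nat.card G = p ^ m) (hab : ∀ a b : G, a * b = b * a)
    (x : G) (hx : x ^ p ≠ 1) :
    Nat.card (commutator H) ≤ p ^ ((m - 1) * (m - 2) / 2) := by
  have : Fact p.Prime := ⟨hp⟩
  have hpG : IsPGroup p G := IsPGroup.of_card hG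
  obtain ⟨k, hk⟩ := (IsPGroup.iff_orderOf.mp hpG) x
  have hk1 : 2 ≤ k := by
    by_contra hlt
    apply hx
    rw [← orderOf_dvd_iff_pow_eq_one, hk]
    exact (pow_dvd_pow p (show k ≤ 1 by omega)).trans (by simp)
  refine (green_step h hp hG (hab x) hk (by omega) ?_).trans ?_
  · intro H' G' _ _ π' h' m' hm' hG'
    exact green hp m' H' G' π' h' hG'
  · apply Nat.pow_le_pow_right hp.pos
    have := (card_quot_zpowers hp hG hk).1
    have h2 := tri_mono (a := m - k + 1) (b := m - 1) (by omega)
    simpa [Nat.sub_sub] using h2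


section
variable {H : Type*} {G : Type*} [Group H] [Group G] {π : H →* G}

theorem CExt.congr (h : CExt π) {x x' y y' : H} (hx : π x = π x') (hy : π y = π y') :
    ⁅x, y⁆ = ⁅x', y'⁆ := by
  obtain ⟨a, ha⟩ : ∃ a, a = x * x'⁻¹ := ⟨_, rfl⟩
  obtain ⟨b, hb⟩ : ∃ b, b = y * y'⁻¹ := ⟨_, rfl⟩
  have h1 := h.cen a (by rw [ha]; simp [hx])
  have h2 := h.cen b (by rw [hb]; simp [hy])
  have ex : x = a * x' := by rw [ha]; simp
  have ey : y = b * y' := by rw [hb]; simp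
  subst ex ey
  simp only [commutatorElement_def, mul_inv_rev]
  have h3 := h1 (b * y' * x'⁻¹ )
  calc a * x' * (b * y') * (x'⁻¹ * a⁻¹) * (y'⁻¹ * b⁻¹)
      = (a * (x' * (b * y') * x'⁻¹)) * a⁻¹ * y'⁻¹ * b⁻¹ := by group
    _ = x' * (b * (y' * x'⁻¹ * y'⁻¹)) * b⁻¹ := by rw [h1]; group
    _ = _ := by rw [h2]; group

theorem CExt.zpow_left (h : CExt π) {x : H} (hx : ∀ g, π x * g = g * π x) (z : H) (k : ℤ) :
    ⁅x ^ k, z⁆ = ⁅x, z⁆ ^ k := by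
  have e1 : z * x * z⁻¹ = ⁅x, z⁆⁻¹ * x := by simp [commutatorElement_def, mul_assoc]
  have hc := h.cen _ (h.comm_ker hx z)
  have e2 : z * x ^ k * z⁻¹ = (⁅x, z⁆⁻¹ * x) ^ k := by
    rw [← e1, conj_zpow]
  have e3 : (⁅x, z⁆⁻¹ * x) ^ k = ⁅x, z⁆⁻¹ ^ k * x ^ k := by
    apply Commute.mul_zpow
    exact Commute.inv_left (hc x)
  have : ⁅x ^ k, z⁆ = x ^ k * (z * x ^ k * z⁻¹)⁻¹ := by
    simp [commutatorElement_def, mul_assoc]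
  rw [this, e2, e3, inv_zpow]
  group

theorem CExt.comm_conj (h : CExt π) {x : H} (hx : ∀ g, π x * g = g * π x) (y z : H) :
    ⁅x, y * z * y⁻¹⁆ = ⁅x, z⁆ := by
  have : cHom h hx (y * z * y⁻¹) = cHom h hx y * cHom h hx z * (cHom h hx y)⁻¹ := by
    rw [map_mul, map_mul, map_inv]
  rw [cHom_apply, cHom_apply, cHom_apply] at this
  rw [this, ← h.cen _ (h.comm_ker hx z), mul_inv_cancel_right]

theorem CExt.jacobi (h : CExt π) (hc : commutator G ≤ Subgroup.center G) (a b c : H) :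
    ⁅⁅a, b⁆, c⁆ * ⁅⁅b, c⁆, a⁆ * ⁅⁅c, a⁆, b⁆ = 1 := by
  have key : ∀ a b : H, ∀ g, π ⁅a, b⁆ * g = g * π ⁅a, b⁆ := by
    intro a b g
    have : π ⁅a, b⁆ ∈ commutator G := by
      rw [map_commutatorElement]
      exact Subgroup.commutator_mem_commutator (Subgroup.mem_top _) (Subgroup.mem_top _)
    exact (Subgroup.mem_center_iff.mp (hc this) g).symm
  have := commutatorElement_commutatorElement_conj_mul a b c
  rwa [h.comm_conj (key _ _), h.comm_conj (key _ _), h.comm_conj (key _ _)] at this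

end

theorem normal_inter_center {G : Type*} [Group G] [Finite G] {p : ℕ} [Fact p.Prime]
    (hG : IsPGroup p G) (N : Subgroup G) [N.Normal] (hN : N ≠ ⊥) :
    ∃ x ∈ N, x ≠ 1 ∧ (∀ g, x * g = g * x) := by
  have hpN : IsPGroup p N := hG.to_subgroup N
  have : Nontrivial N := (Subgroup.nontrivial_iff_ne_bot N).mpr hN
  let hact : MulAction (ConjAct G) N := inferInstance
  have hG2 : IsPGroup p (ConjAct G) := hG
  obtain ⟨k, hk, hcard⟩ := hpN.nontrivial_iff_card.mp this
  have h1 : p ∣ Nat.card N := by rw [hcard]; exact dvd_pow_self p hk.ne'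
  obtain ⟨b, hb, hb1⟩ := hG2.exists_fixed_point_of_prime_dvd_card_of_fixed_point N h1
    (a := 1) (by intro g; simp)
  refine ⟨b, b.2, fun h => hb1 (Subtype.ext h.symm), fun g => ?_⟩
  have := hb (ConjAct.toConjAct g)
  have h2 : g * b * g⁻¹ = (b : G) := congrArg Subtype.val this
  calc (b : G) * g = g * b * g⁻¹ * g := by rw [h2]
    _ = g * b := by group

theorem central_of_card_p {G : Type*} [Group G] [Finite G] {p : ℕ} [hp : Fact p.Prime]
    (hG : IsPGroup p G) (N : Subgroup G) [N.Normal] (hN : Nat.card N = p) :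
    N ≤ Subgroup.center G := by
  have h0 : N ≠ ⊥ := by
    rintro rfl
    simp at hN
    exact hp.out.one_lt.ne hN
  obtain ⟨x, hx, hx1, hxc⟩ := normal_inter_center hG N h0
  intro y hy
  have h1 : Subgroup.zpowers (⟨x, hx⟩ : N) = ⊤ :=
    zpowers_eq_top_of_prime_card hN (fun h => hx1 (congrArg Subtype.val h))
  have h2 : (⟨y, hy⟩ : N) ∈ Subgroup.zpowers (⟨x, hx⟩ : N) := by rw [h1]; trivial
  obtain ⟨k, hk⟩ := h2
  have h3 : x ^ k = y := by simpa using congrArg Subtype.val hk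
  rw [Subgroup.mem_center_iff]
  intro g
  rw [← h3]
  exact ((Commute.zpow_left (hxc g) k).eq).symm

theorem card_quot_comm {G : Type*} [Group G] {p n k : ℕ} (hp : p.Prime) (hG : Nat.card G = p ^ n)
    (N : Subgroup G) (hN : Nat.card N = p ^ k) : k ≤ n ∧ N.index = p ^ (n - k) := by
  have h1 := Subgroup.card_eq_card_quotient_mul_card_subgroup N
  rw [hN, hG] at h1
  have : k ≤ n := by
    apply (Nat.pow_dvd_pow_iff_le_right hp.one_lt).mp
    exact Dvd.intro_left _ h1.symm
  refine ⟨this, ?_⟩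
  rw [← Nat.sub_add_cancel this, pow_add] at h1
  exact (Nat.eq_of_mul_eq_mul_right (Nat.pow_pos hp.pos) h1).symm

section
variable {H : Type u} {G : Type v} [Group H] [Group G] {π : H →* G}

theorem g3_ext (h : CExt π) :
    ∃ ρ : H ⧸ ⁅commutator H, (⊤ : Subgroup H)⁆ →* G ⧸ commutator G, CExt ρ ∧
    Nat.card (commutator H) = Nat.card (⁅commutator H, (⊤ : Subgroup H)⁆ : Subgroup H) *
      Nat.card (commutator (H ⧸ ⁅commutator H, (⊤ : Subgroup H)⁆)) := by
  have hle : ⁅commutator H, (⊤ : Subgroup H)⁆ ≤ commutator H := Subgroup.commutator_le_left _ _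
  have s1 : ⁅commutator H, (⊤ : Subgroup H)⁆ ≤ (commutator G).comap π := by
    refine hle.trans ?_
    rw [← Subgroup.map_le_iff_le_comap, map_comm_surj h.surj]
  have s2 : ∀ x, π x ∈ commutator G → ∀ y, ⁅x, y⁆ ∈ ⁅commutator H, (⊤ : Subgroup H)⁆ := by
    intro x hx y
    rw [← map_comm_surj h.surj] at hx
    obtain ⟨z, hz, hzx⟩ := hx
    rw [h.congr (x' := z) (y' := y) hzx.symm rfl]
    exact Subgroup.commutator_mem_commutator hz (Subgroup.mem_top _)
  obtain ⟨ρ, h1, -, h2⟩ := h.quot ⁅commutator H, (⊤ : Subgroup H)⁆ (commutator G) s1 hle s2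
  exact ⟨ρ, h1, h2⟩

theorem g3_bound (h : CExt π) {p n : ℕ} (hp : p.Prime) (hG : Nat.card G = p ^ n)
    (hG' : Nat.card (commutator G) = p ^ 2) :
    Nat.card (commutator H) ≤ Nat.card (⁅commutator H, (⊤ : Subgroup H)⁆ : Subgroup H) *
      p ^ ((n - 2) * (n - 3) / 2) := by
  obtain ⟨ρ, h1, h2⟩ := g3_ext h
  have := (card_quot_comm hp hG _ hG').2
  have h3 := green hp (n - 2) _ _ ρ h1 this
  rw [h2]
  exact Nat.mul_le_mul_left _ h3

theorem g3_bound' (h : CExt π) {p n : ℕ} (hp : p.Prime) (hG : Nat.card G = p ^ n)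
    (hG' : Nat.card (commutator G) = p ^ 2) (x : G) (hx : x ^ p ∉ commutator G) :
    Nat.card (commutator H) ≤ Nat.card (⁅commutator H, (⊤ : Subgroup H)⁆ : Subgroup H) *
      p ^ ((n - 3) * (n - 4) / 2) := by
  obtain ⟨ρ, h1, h2⟩ := g3_ext h
  have := (card_quot_comm hp hG _ hG').2
  have h3 := green_nonelem hp h1 this (fun a b => mul_comm (G := Abelianization G) a b)
    (x : G ⧸ commutator G) ?_
  · rw [h2]
    exact Nat.mul_le_mul_left _ h3
  · rw [← QuotientGroup.mk_pow, Ne, QuotientGroup.eq_one_iff]; exact hx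

theorem lemC (h : CExt π) {p : ℕ} [hp : Fact p.Prime] [Finite G] (hpG : IsPGroup p G)
    (hG' : Nat.card (commutator G) = p) :
    Nat.card (⁅commutator H, (⊤ : Subgroup H)⁆ : Subgroup H) ≤ p ^ 2 := by
  have hcen := central_of_card_p hpG _ hG'
  have : ∃ y z : H, π ⁅y, z⁆ ≠ 1 := by
    by_contra! hcon
    have : commutator G = ⊥ := by
      rw [commutator_def, eq_bot_iff, Subgroup.commutator_le]
      intro a _ b _
      obtain ⟨a, rfl⟩ := h.surj a
      obtain ⟨b, rfl⟩ := h.surj b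
      rw [← map_commutatorElement]
      exact hcon a b
    rw [this] at hG'
    simp at hG'
    exact hp.out.one_lt.ne hG'
  obtain ⟨y, z, hyz⟩ := this
  have hmem : ∀ a b : H, π ⁅a, b⁆ ∈ commutator G := by
    intro a b
    rw [map_commutatorElement]
    exact Subgroup.commutator_mem_commutator (Subgroup.mem_top _) (Subgroup.mem_top _)
  obtain ⟨c, hc⟩ : ∃ c, c = ⁅y, z⁆ := ⟨_, rfl⟩
  rw [← hc] at hyz
  have hcG : π c ∈ commutator G := by rw [hc]; exact hmem _ _
  have hgen : ∀ g ∈ commutator G, ∃ k : ℤ, π c ^ k = g := by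
    intro g hg
    have h1 : Subgroup.zpowers (⟨π c, hcG⟩ : commutator G) = ⊤ :=
      zpowers_eq_top_of_prime_card hG' (fun h => hyz (congrArg Subtype.val h))
    have h2 : (⟨g, hg⟩ : commutator G) ∈ Subgroup.zpowers (⟨π c, hcG⟩ : commutator G) := by
      rw [h1]; trivial
    obtain ⟨k, hk⟩ := h2
    exact ⟨k, by simpa using congrArg Subtype.val hk⟩
  have hx : ∀ g, π c * g = g * π c := fun g => (Subgroup.mem_center_iff.mp (hcen hcG) g).symm
  have hcp : π (c ^ (p : ℤ)) = 1 := by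
    have h1 : (⟨π c, hcG⟩ : commutator G) ^ p = 1 := by
      rw [← hG']; exact pow_card_eq_one'
    have := congrArg Subtype.val h1
    simpa using this
  have hord : ∀ v : H, ⁅c, v⁆ ^ p = 1 := by
    intro v
    have := h.zpow_left hx v p
    rw [← zpow_natCast, ← this, commutatorElement_eq_one_iff_mul_comm]
    exact h.cen _ hcp v
  have hpow : ∀ u v : H, π u ∈ commutator G → ∃ k : ℤ, ⁅u, v⁆ = ⁅c, v⁆ ^ k := by
    intro u v hu
    obtain ⟨k, hk⟩ := hgen _ hu
    refine ⟨k, ?_⟩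
    rw [← h.zpow_left hx]
    exact h.congr (by rw [map_zpow, hk]) rfl
  have hle : (⁅commutator H, (⊤ : Subgroup H)⁆ : Subgroup H) ≤ (cHom h hx).range := by
    rw [Subgroup.commutator_le]
    intro u hu v _
    have hu' : π u ∈ commutator G := by
      rw [← map_comm_surj h.surj]; exact ⟨u, hu, rfl⟩
    obtain ⟨k, hk⟩ := hpow u v hu'
    rw [hk]
    exact Subgroup.zpow_mem (cHom h hx).range ⟨v, rfl⟩ k
  have hrep : ∀ e : (⁅commutator H, (⊤ : Subgroup H)⁆ : Subgroup H),
      ∃ ab : Subgroup.zpowers ⁅c, y⁆ × Subgroup.zpowers ⁅c, z⁆, (ab.1 : H) * ab.2 = e := by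
    rintro ⟨e, he⟩
    obtain ⟨x, rfl⟩ := hle he
    have hj := h.jacobi hcen y z x
    rw [← hc] at hj
    obtain ⟨k, hk⟩ := hpow ⁅z, x⁆ y (hmem _ _)
    obtain ⟨l, hl⟩ := hpow ⁅x, y⁆ z (hmem _ _)
    rw [hk, hl] at hj
    refine ⟨⟨⟨⁅c, y⁆ ^ (-k), ⟨_, rfl⟩⟩, ⟨⁅c, z⁆ ^ (-l), ⟨_, rfl⟩⟩⟩, ?_⟩
    simp only [cHom_apply]
    have h1 : ⁅c, x⁆ = (⁅c, y⁆ ^ k * ⁅c, z⁆ ^ l)⁻¹ := by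
      rw [eq_inv_iff_mul_eq_one, ← mul_assoc]; exact hj
    have h2 := h.cen (⁅c, y⁆ ^ (-k)) (by rw [map_zpow, h.comm_ker hx]; simp) (⁅c, z⁆ ^ (-l))
    rw [h1, mul_inv_rev, ← zpow_neg, ← zpow_neg, h2]
  choose F hF using hrep
  have hFi : Function.Injective F := by
    intro e e' hee
    apply Subtype.ext
    rw [← hF e, ← hF e', hee]
  have o1 : ∀ v : H, orderOf ⁅c, v⁆ ∣ p := fun v => orderOf_dvd_of_pow_eq_one (hord v)
  have f1 : ∀ v : H, Finite (Subgroup.zpowers ⁅c, v⁆) := by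
    intro v
    apply Nat.finite_of_card_ne_zero
    rw [Nat.card_zpowers]
    intro h0
    have := o1 v
    rw [h0, zero_dvd_iff] at this
    exact hp.out.ne_zero this
  have := f1 y
  have := f1 z
  refine (Nat.card_le_card_of_injective F hFi).trans ?_
  rw [Nat.card_prod, Nat.card_zpowers, Nat.card_zpowers, sq]
  exact Nat.mul_le_mul (Nat.le_of_dvd hp.out.pos (o1 y)) (Nat.le_of_dvd hp.out.pos (o1 z))

theorem lemB (h : CExt π) {p : ℕ} [hp : Fact p.Prime] [Finite G] (hpG : IsPGroup p G)
    (hG' : Nat.card (commutator G) = p ^ 2) {x : H} (hx : ∀ g, π x * g = g * π x)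
    (hxG : π x ∈ commutator G) (hxo : orderOf (π x) = p) :
    Nat.card (⁅commutator H, (⊤ : Subgroup H)⁆ : Subgroup H) ≤
      Nat.card (cHom h hx).range * p ^ 2 := by
  have i1 := cHom_range_normal h hx
  have i2 := zpowers_normal_of_central hx
  obtain ⟨ρ, hρ, -, hcard⟩ := h.peel hx
  have hc : Nat.card (commutator (G ⧸ Subgroup.zpowers (π x))) = p := by
    have h1 := card_map_mul (QuotientGroup.mk' (Subgroup.zpowers (π x))) (commutator G)
    rw [map_comm_surj (QuotientGroup.mk'_surjective _), QuotientGroup.ker_mk', inf_eq_left.mpr,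
      Nat.card_zpowers, hxo, hG', sq] at h1
    · exact (Nat.eq_of_mul_eq_mul_right hp.out.pos h1).symm
    · rw [Subgroup.zpowers_le]; exact hxG
  have h2 := lemC hρ (hpG.to_quotient _) hc
  rw [card_map_mul (QuotientGroup.mk' (cHom h hx).range), map_g3_surj
    (QuotientGroup.mk'_surjective _), QuotientGroup.ker_mk', mul_comm]
  refine Nat.mul_le_mul ?_ h2
  have hfin : Finite (cHom h hx).range := by
    have : commutator G ≤ commutator G := le_rfl
    apply Nat.finite_of_card_ne_zero
    rw [← Subgroup.index_ker]
    have h3 : (commutator G).comap π ≤ (cHom h hx).ker := fun y hy => cHom_comm h hx hy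
    have h4 := Subgroup.index_dvd_of_le h3
    rw [Subgroup.index_comap_of_surjective _ h.surj] at h4
    intro h0
    rw [h0, zero_dvd_iff] at h4
    exact Subgroup.index_ne_zero_of_finite h4
  exact Subgroup.card_le_of_le (inf_le_left)

end


theorem exists_central_p {G : Type*} [Group G] [Finite G] {p : ℕ} [hp : Fact p.Prime]
    (hG : IsPGroup p G) (N : Subgroup G) [N.Normal] (hN : N ≠ ⊥) :
    ∃ x ∈ N, orderOf x = p ∧ (∀ g, x * g = g * x) := by
  obtain ⟨x, hx, hx1, hxc⟩ := normal_inter_center hG N hN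
  obtain ⟨k, hk⟩ := (IsPGroup.iff_orderOf.mp hG) x
  have hk0 : k ≠ 0 := by
    rintro rfl
    exact hx1 (orderOf_eq_one_iff.mp (by simpa using hk))
  refine ⟨x ^ (p ^ (k - 1)), Subgroup.pow_mem _ hx _, ?_, fun g => (Commute.pow_left (hxc g) _).eq⟩
  rw [orderOf_pow_of_dvd (pow_pos hp.out.pos _).ne', hk]
  · rw [Nat.pow_div (Nat.sub_le _ _) hp.out.pos, Nat.sub_sub_self (by omega), pow_one]
  · rw [hk]; exact pow_dvd_pow _ (Nat.sub_le _ _)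

section
variable {H : Type u} {G : Type v} [Group H] [Group G] {π : H →* G}

theorem class_two (h : CExt π) {p : ℕ} [hp : Fact p.Prime] [Finite G] (hpG : IsPGroup p G)
    (hG' : Nat.card (commutator G) = p ^ 2)
    (hbig : p ^ 3 < Nat.card (⁅commutator H, (⊤ : Subgroup H)⁆ : Subgroup H)) :
    commutator G ≤ Subgroup.center G := by
  by_contra hcon
  have hne : commutator G ≠ ⊥ := by
    intro h0
    rw [h0] at hcon
    exact hcon bot_le
  obtain ⟨x1, hx1, ho1, hc1⟩ := exists_central_p hpG (commutator G) hne
  have i2 := zpowers_normal_of_central hc1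
  have hqc : Nat.card (commutator (G ⧸ Subgroup.zpowers x1)) = p := by
    have h1 := card_map_mul (QuotientGroup.mk' (Subgroup.zpowers x1)) (commutator G)
    rw [map_comm_surj (QuotientGroup.mk'_surjective _), QuotientGroup.ker_mk', inf_eq_left.mpr,
      Nat.card_zpowers, ho1, hG', sq] at h1
    · exact (Nat.eq_of_mul_eq_mul_right hp.out.pos h1).symm
    · rw [Subgroup.zpowers_le]; exact hx1
  have hqcen := central_of_card_p (hpG.to_quotient _) _ hqc
  have hmk : CExt (QuotientGroup.mk' (Subgroup.zpowers x1)) := by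
    refine ⟨QuotientGroup.mk'_surjective _, ?_⟩
    intro a ha y
    rw [← MonoidHom.mem_ker, QuotientGroup.ker_mk'] at ha
    obtain ⟨k, rfl⟩ := ha
    exact (Commute.zpow_left (hc1 y) k).eq
  have hts : ∃ t ∈ commutator G, ∃ s : G, ⁅t, s⁆ ≠ 1 := by
    by_contra! hcc
    apply hcon
    intro t ht
    rw [Subgroup.mem_center_iff]
    intro g
    exact (commutatorElement_eq_one_iff_mul_comm.mp (hcc t ht g)).symm
  obtain ⟨t, ht, s, hts⟩ := hts
  have htc : ∀ g, QuotientGroup.mk' (Subgroup.zpowers x1) t * g =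
      g * QuotientGroup.mk' (Subgroup.zpowers x1) t := by
    intro g
    refine (Subgroup.mem_center_iff.mp (hqcen ?_) g).symm
    rw [← map_comm_surj (QuotientGroup.mk'_surjective (Subgroup.zpowers x1))]
    exact ⟨t, ht, rfl⟩
  have hr1 := cHom_range_le hmk htc
  rw [QuotientGroup.ker_mk'] at hr1
  have hKi : (cHom hmk htc).ker.index ≤ p := by
    rw [Subgroup.index_ker, ← ho1, ← Nat.card_zpowers]
    exact Subgroup.card_le_of_le hr1
  have hxz : ⁅t, s⁆ ∈ Subgroup.zpowers x1 := hr1 ⟨s, rfl⟩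
  have hxc : ∀ g, ⁅t, s⁆ * g = g * ⁅t, s⁆ := by
    obtain ⟨k, hk⟩ := hxz
    rw [← hk]
    intro g
    exact (Commute.zpow_left (hc1 g) k).eq
  have hxo : orderOf ⁅t, s⁆ = p := by
    have h1 : orderOf ⁅t, s⁆ ∣ p := by
      rw [← ho1, ← Nat.card_zpowers x1]
      have := Subgroup.card_dvd_of_le (Subgroup.zpowers_le.mpr hxz)
      rwa [Nat.card_zpowers] at this
    rcases (Nat.dvd_prime hp.out).mp h1 with h2 | h2
    · exact absurd (orderOf_eq_one_iff.mp h2) hts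
    · exact h2
  obtain ⟨t, rfl⟩ := h.surj t
  obtain ⟨s, rfl⟩ := h.surj s
  rw [← map_commutatorElement] at hxz hxc hxo hts
  have hxG : π ⁅t, s⁆ ∈ commutator G := by
    rw [map_commutatorElement]
    exact Subgroup.commutator_mem_commutator (Subgroup.mem_top _) (Subgroup.mem_top _)
  have hcent : commutator G ≤ (Subgroup.centralizer {t}).map π := by
    have hle : Subgroup.zpowers (π ⁅t, s⁆) ≤ (Subgroup.centralizer {t}).map π ⊓ commutator G := by
      rw [Subgroup.zpowers_le]
      refine ⟨⟨⁅t, s⁆, ?_, rfl⟩, hxG⟩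
      change _ ∈ Subgroup.centralizer {t}
      rw [Subgroup.mem_centralizer_singleton_iff]
      exact commutatorElement_eq_one_iff_mul_comm.mp (cHom_comm h hxc ht)
    have htm : π t ∈ (Subgroup.centralizer {t}).map π ⊓ commutator G := by
      refine ⟨⟨t, ?_, rfl⟩, ht⟩
      change _ ∈ Subgroup.centralizer {t}
      rw [Subgroup.mem_centralizer_singleton_iff]
    have htn : π t ∉ Subgroup.zpowers (π ⁅t, s⁆) := by
      rintro ⟨k, hk⟩
      apply hts
      rw [map_commutatorElement, commutatorElement_eq_one_iff_mul_comm, ← hk]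
      exact (Commute.zpow_left (hxc (π s)) k).eq
    have hdvd := Subgroup.card_dvd_of_le
      (inf_le_right : (Subgroup.centralizer {t}).map π ⊓ commutator G ≤ commutator G)
    rw [hG'] at hdvd
    obtain ⟨j, hj, hcj⟩ := (Nat.dvd_prime_pow hp.out).mp hdvd
    have hz := Nat.card_zpowers (π ⁅t, s⁆)
    rw [hxo] at hz
    have hj2 : j = 2 := by
      by_contra hj2
      apply htn
      have : (Subgroup.centralizer {t}).map π ⊓ commutator G ≤ Subgroup.zpowers (π ⁅t, s⁆) := by
        refine (Subgroup.eq_of_le_of_card_ge hle ?_).ge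
        rw [hz, hcj]
        calc p ^ j ≤ p ^ 1 := Nat.pow_le_pow_right hp.out.pos (by omega)
          _ = p := pow_one p
      exact this htm
    rw [hj2, ← hG'] at hcj
    have := Subgroup.eq_of_le_of_card_ge
      (inf_le_right : (Subgroup.centralizer {t}).map π ⊓ commutator G ≤ commutator G) hcj.ge
    rw [← this]
    exact inf_le_left
  have hcom : ∀ u, π u ∈ commutator G → ⁅u, t⁆ = 1 := by
    intro u hu
    obtain ⟨u', hu', he⟩ := hcent hu
    rw [h.congr (x' := u') (y' := t) he.symm rfl, commutatorElement_eq_one_iff_mul_comm]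
    exact Subgroup.mem_centralizer_singleton_iff.mp hu'
  have hfin := lemB h hpG hG' hxc hxG hxo
  have hK := cHom_card h hxc (cHom hmk htc).ker (Subgroup.index_ne_zero_of_finite) ?_
  · have : Nat.card (cHom h hxc).range * p ^ 2 ≤ p * p ^ 2 := Nat.mul_le_mul_right _ (hK.trans hKi)
    have e : p * p ^ 2 = p ^ 3 := by ring
    omega
  · intro v hv
    rw [MonoidHom.mem_ker, cHom_apply, ← map_commutatorElement] at hv
    have hw := commutatorElement_commutatorElement_conj_mul t s v
    have hvt : π ⁅v, t⁆ = 1 := by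
      rw [← commutatorElement_inv, map_inv, hv, inv_one]
    have e3 : ∀ z : H, ⁅⁅v, t⁆, z⁆ = 1 := fun z => by
      rw [commutatorElement_eq_one_iff_mul_comm]; exact h.cen _ hvt z
    have e2 : ⁅⁅s, v⁆, v * t * v⁻¹⁆ = 1 := by
      rw [h.congr (x' := ⁅s, v⁆) (y' := t) rfl]
      · apply hcom
        rw [map_commutatorElement]
        exact Subgroup.commutator_mem_commutator (Subgroup.mem_top _) (Subgroup.mem_top _)
      · rw [map_mul, map_mul, map_inv, mul_inv_eq_iff_eq_mul]
        rw [map_commutatorElement, commutatorElement_eq_one_iff_mul_comm] at hvt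
        exact hvt
    rw [h.comm_conj hxc, e2, e3] at hw
    simpa using hw

theorem stepA (h : CExt π) {p n : ℕ} [hp : Fact p.Prime] (hG : Nat.card G = p ^ n) (hn : 5 ≤ n)
    (hG' : Nat.card (commutator G) = p ^ 2)
    (hH : Nat.card (commutator H) = p ^ ((n - 1) * (n - 2) / 2 + 1)) :
    (∀ g : G, g ^ p ∈ commutator G) ∧ commutator G ≤ Subgroup.center G ∧
    p ^ (n - 1) ≤ Nat.card (⁅commutator H, (⊤ : Subgroup H)⁆ : Subgroup H) := by
  have hfin : Finite G := Nat.finite_of_card_ne_zero (by rw [hG]; exact (pow_pos hp.out.pos _).ne')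
  have hpG : IsPGroup p G := IsPGroup.of_card hG
  have t1 := tri_arith (n - 2)
  have t2 := tri_arith (n - 3)
  rw [show n - 2 + 1 = n - 1 by omega, show n - 2 - 1 = n - 3 by omega] at t1
  rw [show n - 3 + 1 = n - 2 by omega, show n - 3 - 1 = n - 4 by omega] at t2
  have hbig : p ^ (n - 1) ≤ Nat.card (⁅commutator H, (⊤ : Subgroup H)⁆ : Subgroup H) := by
    have := g3_bound h hp.out hG hG'
    rw [hH, ← t1, show n - 2 + (n - 2) * (n - 3) / 2 + 1 = (n - 1) + (n - 2) * (n - 3) / 2 by omega,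
      pow_add] at this
    exact Nat.le_of_mul_le_mul_right this (pow_pos hp.out.pos _)
  have hne : commutator G ≠ ⊥ := by
    intro h0
    rw [h0] at hG'
    simp at hG'
    have := hp.out.one_lt
    nlinarith
  obtain ⟨x, hxG, hxo, hxc⟩ := exists_central_p hpG (commutator G) hne
  obtain ⟨x, rfl⟩ := h.surj x
  refine ⟨?_, ?_, hbig⟩
  · intro g
    by_contra hg
    have b1 := g3_bound' h hp.out hG hG' g hg
    have b2 := lemB h hpG hG' hxc hxG hxo
    have b3 := cHom_card h hxc (commutator G) (Subgroup.index_ne_zero_of_finite)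
      (fun y hy => cHom_comm h hxc hy)
    rw [(card_quot_comm hp.out hG _ hG').2] at b3
    have b4 : Nat.card (commutator H) ≤ p ^ (n - 2) * p ^ 2 * p ^ ((n - 3) * (n - 4) / 2) :=
      b1.trans (Nat.mul_le_mul_right _ (b2.trans (Nat.mul_le_mul_right _ b3)))
    rw [hH, ← pow_add, ← pow_add, Nat.pow_le_pow_iff_right hp.out.one_lt] at b4
    omega
  · apply class_two h hpG hG'
    refine lt_of_lt_of_le ?_ hbig
    exact Nat.pow_lt_pow_right hp.out.one_lt (by omega)
end


section
variable {F V W P : Type*} [Field F] [AddCommGroup V] [Module F V] [AddCommGroup W] [Module F W]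
  [AddCommGroup P] [Module F P] [FiniteDimensional F V] [FiniteDimensional F W]
  [FiniteDimensional F P]

theorem plucker (ω : V →ₗ[F] V →ₗ[F] W) (β : V →ₗ[F] W →ₗ[F] P)
    (hω : ∀ v, ω v v = 0) (hW : Module.finrank F W = 2)
    (hβ : ∀ φ : P →ₗ[F] F, (∀ v w, φ (β v w) = 0) → φ = 0)
    (hP : Module.finrank F V < Module.finrank F P)
    (jac : ∀ x y z, β x (ω y z) + β y (ω z x) + β z (ω x y) = 0)
    (l : W →ₗ[F] F) (x y z t : V) :
    l (ω x y) * l (ω z t) - l (ω x z) * l (ω y t) + l (ω x t) * l (ω y z) = 0 := by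
  by_cases hl : l = 0
  · subst hl; simp
  obtain ⟨w2, hw2⟩ : ∃ w2, l w2 = 1 := by
    obtain ⟨w, hw⟩ : ∃ w, l w ≠ 0 := by
      by_contra! hc
      exact hl (LinearMap.ext hc)
    exact ⟨(l w)⁻¹ • w, by simp [hw]⟩
  have hk : Module.finrank F (LinearMap.ker l) ≤ 1 := by
    have h1 := LinearMap.finrank_range_add_finrank_ker l
    have h2 : LinearMap.range l = ⊤ := by
      rw [LinearMap.range_eq_top]
      intro c
      exact ⟨c • w2, by simp [hw2]⟩
    rw [h2, finrank_top, Module.finrank_self] at h1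
    omega
  obtain ⟨w1, hw1⟩ := finrank_le_one_iff.mp hk
  have hlt : LinearMap.range (β.flip (w1 : W)) < ⊤ := by
    rw [lt_top_iff_ne_top]
    intro h0
    have h1 := LinearMap.finrank_range_le (β.flip (w1 : W))
    rw [h0, finrank_top] at h1
    omega
  obtain ⟨φ, hφ, hφ2⟩ := Submodule.exists_le_ker_of_lt_top _ hlt
  have e1 : ∀ v w, φ (β v w) = l w * φ (β v w2) := by
    intro v w
    have hm : w - l w • w2 ∈ LinearMap.ker l := by simp [hw2]
    obtain ⟨c, hc⟩ := hw1 ⟨_, hm⟩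
    have hc' : c • (w1 : W) = w - l w • w2 := congrArg Subtype.val hc
    have hz : φ (β v w1) = 0 := hφ2 ⟨v, rfl⟩
    have : w = c • (w1 : W) + l w • w2 := by rw [hc']; simp
    conv_lhs => rw [this]
    simp [hz]
  obtain ⟨x0, hx0⟩ : ∃ x0, φ (β x0 w2) ≠ 0 := by
    by_contra! hc
    apply hφ
    apply hβ
    intro v w
    rw [e1, hc, mul_zero]
  have J : ∀ y z, l (ω y z) * φ (β x0 w2) + l (ω z x0) * φ (β y w2) +
      l (ω x0 y) * φ (β z w2) = 0 := by
    intro y z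
    have := congrArg φ (jac x0 y z)
    rw [map_add, map_add, e1 x0, e1 y, e1 z, map_zero] at this
    exact this
  obtain ⟨g, hg⟩ : ∃ g : V → F, ∀ v, g v = φ (β v w2) := ⟨_, fun _ => rfl⟩
  simp only [← hg] at J hx0
  have anti : ∀ u v, ω u v = - ω v u := by
    intro u v
    have := hω (u + v)
    simp only [map_add, LinearMap.add_apply, hω, zero_add, add_zero] at this
    exact eq_neg_of_add_eq_zero_right this
  obtain ⟨q, hq⟩ : ∃ q : V → F, ∀ v, q v = l (ω x0 v) := ⟨_, fun _ => rfl⟩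
  have J2 : ∀ y z, l (ω y z) = (q z * g y - q y * g z) * (g x0)⁻¹ := by
    intro y z
    have := J y z
    rw [anti z x0, map_neg, ← hq, ← hq] at this
    field_simp
    linear_combination this
  rw [J2, J2, J2, J2, J2, J2]
  ring

theorem lin_ex (ω : V →ₗ[F] V →ₗ[F] W) (hω : ∀ v, ω v v = 0)
    (hW : Module.finrank F W = 2)
    (hs : Submodule.span F {w | ∃ u v, ω u v = w} = ⊤) :
    ∃ a b1 b2 : V, LinearIndependent F ![ω a b1, ω a b2] := by
  have anti : ∀ u v, ω u v = - ω v u := by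
    intro u v
    have := hω (u + v)
    simp only [map_add, LinearMap.add_apply, hω, zero_add, add_zero] at this
    exact eq_neg_of_add_eq_zero_right this
  by_contra! hcon
  have dep : ∀ a b c, ω a b ≠ 0 → ∃ k : F, k • ω a b = ω a c := by
    intro a b c hb
    by_contra! hc
    exact hcon a b c ((LinearIndependent.pair_iff' hb).mpr hc)
  obtain ⟨x, y, hxy⟩ : ∃ x y, ω x y ≠ 0 := by
    by_contra! hc
    have : Submodule.span F {w | ∃ u v, ω u v = w} ≤ ⊥ := by
      rw [Submodule.span_le]
      rintro _ ⟨u, v, rfl⟩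
      simp [hc]
    rw [hs] at this
    have h1 := finrank_top F W
    rw [eq_bot_iff.mpr this] at h1
    simp at h1
    omega
  obtain ⟨u, v, huv⟩ : ∃ u v, ω u v ∉ Submodule.span F {ω x y} := by
    by_contra! hc
    have : Submodule.span F {w | ∃ u v, ω u v = w} ≤ Submodule.span F {ω x y} := by
      rw [Submodule.span_le]
      rintro _ ⟨u, v, rfl⟩
      exact hc u v
    rw [hs] at this
    have h1 := finrank_top F W
    have h2 := finrank_span_singleton (K := F) hxy
    rw [eq_top_iff.mpr this, h1] at h2
    omega
  have hn : ∀ k : F, k • ω x y ≠ ω u v := by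
    intro k hk
    exact huv (Submodule.mem_span_singleton.mpr ⟨k, hk⟩)
  have huv0 : ω u v ≠ 0 := fun h0 => hn 0 (by simp [h0])
  obtain ⟨α, hα⟩ := dep x y v hxy
  obtain ⟨γ, hγ⟩ := dep u v y huv0
  by_cases h0 : γ = 0
  · have hy : ω u y = 0 := by rw [← hγ, h0, zero_smul]
    have e1 : ω (x + u) y = ω x y := by simp [hy]
    have e2 : ω (x + u) v = α • ω x y + ω u v := by simp [hα]
    obtain ⟨k, hk⟩ := dep (x + u) y v (by rw [e1]; exact hxy)
    rw [e1, e2] at hk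
    apply hn (k - α)
    rw [sub_smul, hk]; simp
  · have e1 : ω y x = - ω x y := anti _ _
    have e2 : ω y u = - γ • ω u v := by rw [anti, ← hγ]; simp
    obtain ⟨k, hk⟩ := dep y x u (by rw [e1]; simpa using hxy)
    rw [e1, e2] at hk
    apply hn (γ⁻¹ * k)
    have : k • ω x y = γ • ω u v := by simpa using hk
    rw [mul_smul, this, smul_smul, inv_mul_cancel₀ h0, one_smul]

theorem lin_struct (ω : V →ₗ[F] V →ₗ[F] W) (β : V →ₗ[F] W →ₗ[F] P) (hω : ∀ v, ω v v = 0)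
    (hW : Module.finrank F W = 2)
    (hs : Submodule.span F {w | ∃ u v, ω u v = w} = ⊤)
    (hβ : ∀ φ : P →ₗ[F] F, (∀ v w, φ (β v w) = 0) → φ = 0)
    (hP : Module.finrank F V < Module.finrank F P)
    (jac : ∀ x y z, β x (ω y z) + β y (ω z x) + β z (ω x y) = 0) :
    ∃ (a b1 b2 : V) (l1 l2 : W →ₗ[F] F), ω b1 b2 = 0 ∧
      (l1 (ω a b1) = 1 ∧ l1 (ω a b2) = 0 ∧ l2 (ω a b1) = 0 ∧ l2 (ω a b2) = 1) ∧
      (∀ w, w = l1 w • ω a b1 + l2 w • ω a b2) ∧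
      ∀ v, ∃ (x y z : F) (r : V), v = x • a + y • b1 + z • b2 + r ∧ ∀ u, ω r u = 0 := by
  have anti : ∀ u v, ω u v = - ω v u := by
    intro u v
    have := hω (u + v)
    simp only [map_add, LinearMap.add_apply, hω, zero_add, add_zero] at this
    exact eq_neg_of_add_eq_zero_right this
  obtain ⟨a, b1, b2, hli⟩ := lin_ex ω hω hW hs
  let B := basisOfLinearIndependentOfCardEqFinrank hli (by simp [hW])
  have B0 : B 0 = ω a b1 := by simp [B]
  have B1 : B 1 = ω a b2 := by simp [B]
  obtain ⟨l1, hl1⟩ : ∃ l1, l1 = B.coord 0 := ⟨_, rfl⟩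
  obtain ⟨l2, hl2⟩ : ∃ l2, l2 = B.coord 1 := ⟨_, rfl⟩
  have E : l1 (ω a b1) = 1 ∧ l1 (ω a b2) = 0 ∧ l2 (ω a b1) = 0 ∧ l2 (ω a b2) = 1 := by
    rw [hl1, hl2, ← B0, ← B1]
    simp
  have D : ∀ w, w = l1 w • ω a b1 + l2 w • ω a b2 := by
    intro w
    have := B.sum_repr w
    rw [Fin.sum_univ_two, B0, B1] at this
    rw [hl1, hl2]
    exact this.symm
  clear_value B
  clear hl1 hl2 B0 B1 hli B
  obtain ⟨d1, hd1⟩ : ∃ d1, d1 = b1 - l2 (ω b1 b2) • a := ⟨_, rfl⟩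
  obtain ⟨d2, hd2⟩ : ∃ d2, d2 = b2 + l1 (ω b1 b2) • a := ⟨_, rfl⟩
  have a1 : ω a d1 = ω a b1 := by rw [hd1]; simp [hω]
  have a2 : ω a d2 = ω a b2 := by rw [hd2]; simp [hω]
  have hdd : ω d1 d2 = 0 := by
    rw [hd1, hd2]
    simp only [map_add, map_sub, map_smul, LinearMap.sub_apply, LinearMap.smul_apply, hω, smul_zero,
      sub_zero]
    have := D (ω b1 b2)
    rw [anti b1 a]
    conv_lhs => enter [1,1]; rw [this]
    module
  rw [← a1, ← a2] at E
  simp only [← a1, ← a2] at D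
  refine ⟨a, d1, d2, l1, l2, hdd, E, D, ?_⟩
  obtain ⟨E1, E2, E3, E4⟩ := E
  clear a1 a2 hd1 hd2 
  have pl := plucker ω β hω hW hβ hP jac
  have C0 : ∀ r, ω a r = 0 → ω d1 r = 0 → ω d2 r = 0 → ∀ s, ω a s = 0 → ω d1 s = 0 → ω d2 s = 0 →
      ω r s = 0 := by
    intro r r1 r2 r3 s s1 s2 s3
    have p1 := pl l1 a d1 r s
    have p2 := pl l2 a d2 r s
    simp only [r1, r2, r3, s1, s2, s3, E1, E4, map_zero] at p1 p2
    rw [D (ω r s), show l1 (ω r s) = 0 by linear_combination p1,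
      show l2 (ω r s) = 0 by linear_combination p2]
    simp
  have dec : ∀ v, ∃ (x y z : F) (r : V), v = x • a + y • d1 + z • d2 + r ∧
      ω a r = 0 ∧ ω d1 r = 0 ∧ ω d2 r = 0 := by
    intro v
    obtain ⟨s, hs⟩ : ∃ s, s = v - l1 (ω a v) • d1 - l2 (ω a v) • d2 := ⟨_, rfl⟩
    have hs0 : ω a s = 0 := by
      rw [hs]
      simp only [map_sub, map_smul]
      nth_rw 1 [D (ω a v)]
      module
    have q1 := pl l1 a d1 d2 s
    have q2 := pl l2 a d1 d2 s
    have q3 := pl (l1 + l2) a d1 d2 s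
    simp only [hs0, hdd, E1, E2, E3, E4, map_zero, LinearMap.add_apply] at q1 q2 q3
    have f1 : l1 (ω d2 s) = 0 := by linear_combination q1
    have f2 : l2 (ω d1 s) = 0 := by linear_combination -q2
    have f3 : l2 (ω d2 s) = l1 (ω d1 s) := by linear_combination q3 - f1 + f2
    refine ⟨-l1 (ω d1 s), l1 (ω a v), l2 (ω a v), s + l1 (ω d1 s) • a, ?_, ?_, ?_, ?_⟩
    · rw [hs]; module
    · simp [hs0, hω]
    · rw [map_add, map_smul, anti d1 a]
      nth_rw 1 [D (ω d1 s)]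
      rw [f2]
      module
    · rw [map_add, map_smul, anti d2 a]
      nth_rw 1 [D (ω d2 s)]
      rw [f1, f3]
      module
  intro v
  obtain ⟨x, y, z, r, hv, r1, r2, r3⟩ := dec v
  refine ⟨x, y, z, r, hv, ?_⟩
  intro u
  obtain ⟨x', y', z', s, hu, s1, s2, s3⟩ := dec u
  rw [hu]
  simp only [map_add, map_smul, C0 r r1 r2 r3 s s1 s2 s3, anti r a, anti r d1, anti r d2, r1, r2, r3]
  simp
end


section
variable {F V W P : Type*} [Field F] [AddCommGroup V] [Module F V] [AddCommGroup W] [Module F W]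
  [AddCommGroup P] [Module F P] [FiniteDimensional F V] [FiniteDimensional F W]
  [FiniteDimensional F P]

theorem lin_main (ω : V →ₗ[F] V →ₗ[F] W) (β : V →ₗ[F] W →ₗ[F] P) (hω : ∀ v, ω v v = 0)
    (hW : Module.finrank F W = 2) (hV : 3 ≤ Module.finrank F V)
    (hs : Submodule.span F {w | ∃ u v, ω u v = w} = ⊤)
    (hβ : Submodule.span F {w | ∃ u v, β u v = w} = ⊤)
    (hP : Module.finrank F V < Module.finrank F P)
    (jac : ∀ x y z, β x (ω y z) + β y (ω z x) + β z (ω x y) = 0)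
    (f : V → W) (ε : F) (hf : ∀ u v, f (u + v) = f u + f v + ε • ω v u)
    (hβf : ∀ v, β v (f v) = 0) :
    ε = 0 ∧ ∃ a b1 b2 : V, ω b1 b2 = 0 ∧ (∀ w, ∃ s t : F, w = s • ω a b1 + t • ω a b2) ∧
      f a = 0 ∧ f b1 = 0 ∧ f b2 = 0 ∧
      ((Module.finrank F V = 3 ∧ ∀ v, ∃ x y z : F, v = x • a + y • b1 + z • b2) ∨
       (Module.finrank F V = 4 ∧ ∃ r, (∀ u, ω r u = 0) ∧ f r = 0 ∧
          ∀ v, ∃ x y z t : F, v = x • a + y • b1 + z • b2 + t • r)) := by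
  have anti : ∀ u v, ω u v = - ω v u := by
    intro u v
    have := hω (u + v)
    simp only [map_add, LinearMap.add_apply, hω, zero_add, add_zero] at this
    exact eq_neg_of_add_eq_zero_right this
  have hβ' : ∀ φ : P →ₗ[F] F, (∀ v w, φ (β v w) = 0) → φ = 0 := by
    intro φ hφ
    have : Submodule.span F {w | ∃ u v, β u v = w} ≤ LinearMap.ker φ := by
      rw [Submodule.span_le]
      rintro _ ⟨u, v, rfl⟩
      exact hφ u v
    rw [hβ] at this
    exact LinearMap.ker_eq_top.mp (eq_top_iff.mpr this)
  obtain ⟨a, b1, b2, l1, l2, hb, ⟨E1, E2, E3, E4⟩, D, dec⟩ := lin_struct ω β hω hW hs hβ' hP jac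
  obtain ⟨c1, hc1⟩ : ∃ c1, c1 = ω a b1 := ⟨_, rfl⟩
  obtain ⟨c2, hc2⟩ : ∃ c2, c2 = ω a b2 := ⟨_, rfl⟩
  simp only [← hc1, ← hc2] at D E1 E2 E3 E4
  have hrad : ∀ r, (∀ u, ω r u = 0) → ∀ w, β r w = 0 := by
    intro r hr w
    have j1 := jac r a b1
    have j2 := jac r a b2
    rw [anti b1 r, hr, hr, ← hc1] at j1
    rw [anti b2 r, hr, hr, ← hc2] at j2
    simp at j1 j2
    rw [D w]
    simp [j1, j2]
  have hS : β b2 c1 = β b1 c2 := by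
    have j := jac a b1 b2
    rw [hb, anti b2 a, ← hc1, ← hc2] at j
    simp only [map_zero, map_neg, zero_add] at j
    exact (neg_add_eq_zero.mp j).symm
  let T : Fin 5 → P := ![β a c1, β a c2, β b1 c1, β b1 c2, β b2 c2]
  let L : (Fin 5 → F) →ₗ[F] P := Fintype.linearCombination F T
  have hL : ∀ k, L k = k 0 • β a c1 + k 1 • β a c2 + k 2 • β b1 c1 + k 3 • β b1 c2 +
      k 4 • β b2 c2 := by
    intro k
    simp [L, T, Fintype.linearCombination_apply, Fin.sum_univ_five]
  have hLs : LinearMap.range L = ⊤ := by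
    rw [eq_top_iff, ← hβ, Submodule.span_le]
    rintro _ ⟨v, w, rfl⟩
    obtain ⟨x, y, z, r, rfl, hr⟩ := dec v
    refine ⟨![x * l1 w, x * l2 w, y * l1 w, y * l2 w + z * l1 w, z * l2 w], ?_⟩
    rw [hL]
    conv_rhs => rw [D w]
    simp only [map_add, map_smul, LinearMap.add_apply, LinearMap.smul_apply, hrad r hr, hS]
    simp
    module
  have hrk := LinearMap.finrank_range_add_finrank_ker L
  rw [hLs, finrank_top] at hrk
  simp at hrk
  have hker : Module.finrank F (LinearMap.ker L) ≤ 1 := by omega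
  obtain ⟨e, he⟩ := finrank_le_one_iff.mp hker
  have R : ∀ k k' : Fin 5 → F, L k = 0 → L k' = 0 → ∀ i j, k i * k' j = k j * k' i := by
    intro k k' hk hk' i j
    obtain ⟨s, hs⟩ := he ⟨k, hk⟩
    obtain ⟨s', hs'⟩ := he ⟨k', hk'⟩
    have h1 : s • (e : Fin 5 → F) = k := congrArg Subtype.val hs
    have h2 : s' • (e : Fin 5 → F) = k' := congrArg Subtype.val hs'
    rw [← h1, ← h2]
    simp only [Pi.smul_apply, smul_eq_mul]
    ring
  -- relations
  have rel : ∀ x y z m n : F, ∀ r, (∀ u, ω r u = 0) →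
      f (x • a + y • b1 + z • b2 + r) = m • c1 + n • c2 →
      L ![x * m, x * n, y * m, y * n + z * m, z * n] = 0 := by
    intro x y z m n r hr hfe
    have := hβf (x • a + y • b1 + z • b2 + r)
    rw [hfe] at this
    rw [hL, ← this]
    simp only [map_add, map_smul, LinearMap.add_apply, LinearMap.smul_apply, hrad r hr, hS]
    simp
    module
  have h0u : ∀ u, ω 0 u = 0 := by simp
  have K1 := rel 0 1 0 (l1 (f b1)) (l2 (f b1)) 0 h0u (by simpa using D (f b1))
  have K2 := rel 0 0 1 (l1 (f b2)) (l2 (f b2)) 0 h0u (by simpa using D (f b2))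
  have K3 := rel 0 1 1 (l1 (f b1) + l1 (f b2)) (l2 (f b1) + l2 (f b2)) 0 h0u (by
    have : (0 : F) • a + (1 : F) • b1 + (1 : F) • b2 + 0 = b1 + b2 := by simp
    rw [this, hf, anti b2 b1, hb]
    nth_rw 1 [D (f b1), D (f b2)]
    module)
  have hf1 : l1 (f b1) = 0 ∧ l2 (f b1) = 0 ∧ l1 (f b2) = 0 ∧ l2 (f b2) = 0 := by
    generalize l1 (f b1) = x at *
    generalize l2 (f b1) = y at *
    generalize l1 (f b2) = z at *
    generalize l2 (f b2) = w at *
    have r12 := R _ _ K1 K2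
    have r13 := R _ _ K1 K3
    have r23 := R _ _ K2 K3
    have A1 := r12 2 3
    have A2 := r12 2 4
    have A3 := r12 3 4
    have A4 := r13 2 3
    have A5 := r13 2 4
    have A6 := r13 3 4
    have A7 := r23 2 3
    have A8 := r23 2 4
    have A9 := r23 3 4
    simp at A1 A2 A3 A4 A5 A6 A7 A8 A9
    have hy : y = 0 := by
      by_contra hy
      grind
    have hz : z = 0 := by
      by_contra hz
      grind
    have hx : x = 0 := by
      by_contra hx
      grind
    have hw : w = 0 := by
      by_contra hw
      grind
    exact ⟨hx, hy, hz, hw⟩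
  have fb1 : f b1 = 0 := by rw [D (f b1), hf1.1, hf1.2.1]; simp
  have fb2 : f b2 = 0 := by rw [D (f b2), hf1.2.2.1, hf1.2.2.2]; simp
  have M1 := rel 1 0 0 (l1 (f a)) (l2 (f a)) 0 h0u (by simpa using D (f a))
  have M2 := rel 1 1 0 (l1 (f a) - ε) (l2 (f a)) 0 h0u (by
    have : (1 : F) • a + (1 : F) • b1 + (0 : F) • b2 + 0 = a + b1 := by simp
    rw [this, hf, anti b1 a, fb1, ← hc1]
    nth_rw 1 [D (f a)]
    module)
  have M3 := rel 1 0 1 (l1 (f a)) (l2 (f a) - ε) 0 h0u (by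
    have : (1 : F) • a + (0 : F) • b1 + (1 : F) • b2 + 0 = a + b2 := by simp
    rw [this, hf, anti b2 a, fb2, ← hc2]
    nth_rw 1 [D (f a)]
    module)
  have hfa : l1 (f a) = 0 ∧ l2 (f a) = 0 ∧ ε = 0 := by
    have A1 := R _ _ M1 M2 1 3
    have A2 := R _ _ M1 M3 0 3
    simp at A1 A2
    have A3 := R _ _ M2 M3 0 1
    simp [A1, A2] at A3
    exact ⟨A2, A1, A3⟩
  obtain ⟨g1, g2, hε⟩ := hfa
  have fa : f a = 0 := by rw [D (f a), g1, g2]; simp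
  refine ⟨hε, a, b1, b2, hb, fun w => ⟨_, _, by rw [← hc1, ← hc2]; exact D w⟩, fa, fb1, fb2, ?_⟩
  have fr : ∀ r, (∀ u, ω r u = 0) → f r = 0 := by
    intro r hr
    have N1 := rel 1 0 0 (l1 (f r)) (l2 (f r)) r hr (by
      have : (1 : F) • a + (0 : F) • b1 + (0 : F) • b2 + r = a + r := by simp
      rw [this, hf, fa, hε]; simpa using D (f r))
    have N2 := rel 0 1 0 (l1 (f r)) (l2 (f r)) r hr (by
      have : (0 : F) • a + (1 : F) • b1 + (0 : F) • b2 + r = b1 + r := by simp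
      rw [this, hf, fb1, hε]; simpa using D (f r))
    have A1 := R _ _ N1 N2 0 2
    have A2 := R _ _ N1 N2 1 3
    simp at A1 A2
    rw [D (f r), A1, A2]; simp
  let Q : ((Fin 3 → F) × LinearMap.ker ω) →ₗ[F] V :=
    (Fintype.linearCombination F ![a, b1, b2]).coprod (LinearMap.ker ω).subtype
  have hQ : ∀ k r, Q (k, r) = k 0 • a + k 1 • b1 + k 2 • b2 + r := by
    intro k r
    simp [Q, Fintype.linearCombination_apply, Fin.sum_univ_three]
  have hQb : Function.Bijective Q := by
    constructor
    · rw [← LinearMap.ker_eq_bot, LinearMap.ker_eq_bot']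
      rintro ⟨k, r, hr⟩ hk
      rw [hQ] at hk
      have hr' : ω r = 0 := hr
      have q1 := congrArg (fun v => ω v b1) hk
      have q2 := congrArg (fun v => ω a v) hk
      simp only [map_add, map_smul, LinearMap.add_apply, LinearMap.smul_apply, hr', hω, 
        anti b2 b1, hb, anti a r, ← hc1, ← hc2] at q1 q2
      have q3 := congrArg l1 q1
      have q4 := congrArg l1 q2
      have q5 := congrArg l2 q2
      simp [E1, E2, E3, E4] at q3 q4 q5
      have hk0 : k = 0 := by
        ext i; fin_cases i
        · exact q3
        · exact q4
        · exact q5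
      subst hk0
      simp at hk
      simp [hk]
    · intro v
      obtain ⟨x, y, z, r, rfl, hr⟩ := dec v
      exact ⟨(![x, y, z], ⟨r, LinearMap.ext hr⟩), by rw [hQ]; simp⟩
  have hdim := LinearEquiv.finrank_eq (LinearEquiv.ofBijective Q hQb)
  rw [Module.finrank_prod] at hdim
  simp at hdim
  have hr1 : Module.finrank F (LinearMap.ker ω) ≤ 1 := by omega
  by_cases h3 : Module.finrank F (LinearMap.ker ω) = 0
  · left
    refine ⟨by omega, ?_⟩
    intro v
    obtain ⟨x, y, z, r, rfl, hr⟩ := dec v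
    refine ⟨x, y, z, ?_⟩
    have hb : LinearMap.ker ω = ⊥ := Submodule.finrank_eq_zero.mp h3
    have : r ∈ LinearMap.ker ω := LinearMap.ext hr
    rw [hb, Submodule.mem_bot] at this
    rw [this, add_zero]
  · right
    refine ⟨by omega, ?_⟩
    obtain ⟨r0, hr0⟩ := finrank_le_one_iff.mp hr1
    have hr0' : ∀ u, ω r0 u = 0 := fun u => by
      have : ω (r0 : V) = 0 := r0.2
      rw [this]; rfl
    refine ⟨r0, hr0', fr _ hr0', ?_⟩
    intro v
    obtain ⟨x, y, z, r, rfl, hr⟩ := dec v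
    obtain ⟨t, ht⟩ := hr0 ⟨r, LinearMap.ext hr⟩
    refine ⟨x, y, z, t, ?_⟩
    have : t • (r0 : V) = r := congrArg Subtype.val ht
    rw [this]
end


theorem exists_bilin {p : ℕ} {M N Q : Type*} [AddCommGroup M] [AddCommGroup N] [AddCommGroup Q]
    [Module (ZMod p) M] [Module (ZMod p) N] [Module (ZMod p) Q] (b : M → N → Q)
    (h1 : ∀ x x' y, b (x + x') y = b x y + b x' y) (h2 : ∀ x y y', b x (y + y') = b x y + b x y') :
    ∃ B : M →ₗ[ZMod p] N →ₗ[ZMod p] Q, ∀ x y, B x y = b x y := by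
  let f1 : N → M →+ Q := fun y => AddMonoidHom.mk' (fun x => b x y) (fun x x' => h1 x x' y)
  let f2 : M → N →+ Q := fun x => AddMonoidHom.mk' (fun y => b x y) (fun y y' => h2 x y y')
  refine ⟨LinearMap.mk₂ (ZMod p) b h1 ?_ h2 ?_, fun x y => rfl⟩
  · intro c x y
    exact ZMod.map_smul (f1 y) c x
  · intro c x y
    exact ZMod.map_smul (f2 x) c y

theorem card_fr {p : ℕ} [hp : Fact p.Prime] {M : Type*} [AddCommGroup M] [Module (ZMod p) M]
    [Finite M] : Nat.card M = p ^ Module.finrank (ZMod p) M := by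
  have : Module.Finite (ZMod p) M := inferInstance
  rw [Module.natCard_eq_pow_finrank (K := ZMod p), Nat.card_zmod]

theorem span_of_closure {p : ℕ} {M : Type*} [AddCommGroup M] [Module (ZMod p) M] (S T : Set M)
    (hST : S = T) (hS : AddSubgroup.closure S = ⊤) : Submodule.span (ZMod p) T = ⊤ := by
  subst hST
  have : AddSubgroup.closure S ≤ (Submodule.span (ZMod p) S).toAddSubgroup := by
    rw [AddSubgroup.closure_le]; exact Submodule.subset_span
  rw [hS] at this
  rw [eq_top_iff]
  exact fun x _ => this (AddSubgroup.mem_top x)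

theorem lin_add {p d : ℕ} [hp : Fact p.Prime] {V W P : Type*} [AddCommGroup V] [AddCommGroup W]
    [AddCommGroup P] (tV : ∀ x : V, p • x = 0) (tW : ∀ x : W, p • x = 0) (tP : ∀ x : P, p • x = 0)
    (cV : Nat.card V = p ^ d) (hd : 3 ≤ d) (cW : Nat.card W = p ^ 2)
    (cP : p ^ (d + 1) ≤ Nat.card P)
    (ω : V → V → W) (ω1 : ∀ x x' y, ω (x + x') y = ω x y + ω x' y)
    (ω2 : ∀ x y y', ω x (y + y') = ω x y + ω x y')
    (β : V → W → P) (β1 : ∀ x x' y, β (x + x') y = β x y + β x' y)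
    (β2 : ∀ x y y', β x (y + y') = β x y + β x y')
    (hω : ∀ v, ω v v = 0)
    (hs : AddSubgroup.closure {w | ∃ u v, ω u v = w} = ⊤)
    (hβ : AddSubgroup.closure {w | ∃ u v, β u v = w} = ⊤)
    (jac : ∀ x y z, β x (ω y z) + β y (ω z x) + β z (ω x y) = 0)
    (f : V → W) (ε : ℕ) (hf : ∀ u v, f (u + v) = f u + f v + ε • ω v u)
    (hβf : ∀ v, β v (f v) = 0) :
    p ∣ ε ∧ ∃ a b1 b2 : V, ω b1 b2 = 0 ∧ (∀ w, ∃ s t : ℕ, w = s • ω a b1 + t • ω a b2) ∧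
      f a = 0 ∧ f b1 = 0 ∧ f b2 = 0 ∧
      ((d = 3 ∧ ∀ v, ∃ x y z : ℕ, v = x • a + y • b1 + z • b2) ∨
       (d = 4 ∧ ∃ r, (∀ u, ω r u = 0) ∧ f r = 0 ∧
          ∀ v, ∃ x y z t : ℕ, v = x • a + y • b1 + z • b2 + t • r)) := by
  let mV : Module (ZMod p) V := AddCommGroup.zmodModule tV
  let mW : Module (ZMod p) W := AddCommGroup.zmodModule tW
  let mP : Module (ZMod p) P := AddCommGroup.zmodModule tP
  have finV : Finite V := Nat.finite_of_card_ne_zero (by rw [cV]; exact (pow_pos hp.out.pos _).ne')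
  have finW : Finite W := Nat.finite_of_card_ne_zero (by rw [cW]; exact (pow_pos hp.out.pos _).ne')
  have finP : Finite P := Nat.finite_of_card_ne_zero
    (by have := pow_pos hp.out.pos (d + 1); omega)
  have iV : Module.Finite (ZMod p) V := Module.Finite.of_finite
  have iW : Module.Finite (ZMod p) W := Module.Finite.of_finite
  have iP : Module.Finite (ZMod p) P := Module.Finite.of_finite
  obtain ⟨Ω, hΩ⟩ := exists_bilin (p := p) ω ω1 ω2
  obtain ⟨B, hB⟩ := exists_bilin (p := p) β β1 β2
  have eV : Module.finrank (ZMod p) V = d := by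
    have := card_fr (p := p) (M := V)
    rw [cV] at this
    exact (Nat.pow_right_injective hp.out.two_le this).symm
  have eW : Module.finrank (ZMod p) W = 2 := by
    have := card_fr (p := p) (M := W)
    rw [cW] at this
    exact (Nat.pow_right_injective hp.out.two_le this).symm
  have eP : d < Module.finrank (ZMod p) P := by
    have := card_fr (p := p) (M := P)
    rw [this, Nat.pow_le_pow_iff_right hp.out.one_lt] at cP
    omega
  have nsV : ∀ (x : ZMod p) (m : V), x • m = x.val • m := by
    intro x m
    rw [← Nat.cast_smul_eq_nsmul (ZMod p), ZMod.natCast_zmod_val]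
  obtain ⟨h1, a, b1, b2, h2, h3, h4, h5, h6, h7⟩ :=
    @lin_main (ZMod p) V W P _ _ _ _ _ _ _ iV iW iP Ω B (by simpa [hΩ] using hω) eW
    (by omega) (span_of_closure _ _ (by simp only [hΩ]) hs) (span_of_closure _ _ (by simp only [hB]) hβ)
    (by omega) (by simpa only [hΩ, hB] using jac) f (ε : ZMod p)
    (by intro u v; rw [hf, hΩ, Nat.cast_smul_eq_nsmul]) (by simpa only [hB] using hβf)
  refine ⟨(ZMod.natCast_eq_zero_iff _ _).mp h1, a, b1, b2, by rw [← hΩ]; exact h2, ?_, h4, h5, h6, ?_⟩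
  · intro w
    obtain ⟨s, t, hw⟩ := h3 w
    refine ⟨s.val, t.val, ?_⟩
    rw [hw, hΩ, hΩ, ← Nat.cast_smul_eq_nsmul (ZMod p), ← Nat.cast_smul_eq_nsmul (ZMod p),
      ZMod.natCast_zmod_val, ZMod.natCast_zmod_val]
  · rw [eV] at h7
    rcases h7 with ⟨hd, h8⟩ | ⟨hd, r, hr, fr, h8⟩
    · left
      refine ⟨hd, fun v => ?_⟩
      obtain ⟨x, y, z, hv⟩ := h8 v
      exact ⟨x.val, y.val, z.val, by rw [hv, nsV, nsV, nsV]⟩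
    · right
      refine ⟨hd, r, fun u => by rw [← hΩ]; exact hr u, fr, fun v => ?_⟩
      obtain ⟨x, y, z, t, hv⟩ := h8 v
      exact ⟨x.val, y.val, z.val, t.val, by rw [hv, nsV, nsV, nsV, nsV]⟩


theorem add_closure {M : Type*} [CommGroup M] (S : Set M) (hS : Subgroup.closure S = ⊤) :
    AddSubgroup.closure (G := Additive M) S = ⊤ := by
  have : Subgroup.closure S ≤ AddSubgroup.toSubgroup' (AddSubgroup.closure (G := Additive M) S) := by
    rw [Subgroup.closure_le]
    exact AddSubgroup.subset_closure (G := Additive M)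
  rw [hS] at this
  rw [eq_top_iff]
  exact fun x _ => this (Subgroup.mem_top (G := M) x)

theorem lin_mul {p d : ℕ} [hp : Fact p.Prime] {V W P : Type*} [CommGroup V] [CommGroup W]
    [CommGroup P] (tV : ∀ x : V, x ^ p = 1) (tW : ∀ x : W, x ^ p = 1) (tP : ∀ x : P, x ^ p = 1)
    (cV : Nat.card V = p ^ d) (hd : 3 ≤ d) (cW : Nat.card W = p ^ 2)
    (cP : p ^ (d + 1) ≤ Nat.card P)
    (ω : V → V → W) (ω1 : ∀ x x' y, ω (x * x') y = ω x y * ω x' y)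
    (ω2 : ∀ x y y', ω x (y * y') = ω x y * ω x y')
    (β : V → W → P) (β1 : ∀ x x' y, β (x * x') y = β x y * β x' y)
    (β2 : ∀ x y y', β x (y * y') = β x y * β x y')
    (hω : ∀ v, ω v v = 1)
    (hs : Subgroup.closure {w | ∃ u v, ω u v = w} = ⊤)
    (hβ : Subgroup.closure {w | ∃ u v, β u v = w} = ⊤)
    (jac : ∀ x y z, β x (ω y z) * β y (ω z x) * β z (ω x y) = 1)
    (f : V → W) (ε : ℕ) (hf : ∀ u v, f (u * v) = f u * f v * (ω v u) ^ ε)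
    (hβf : ∀ v, β v (f v) = 1) :
    p ∣ ε ∧ ∃ a b1 b2 : V, ω b1 b2 = 1 ∧ (∀ w, ∃ s t : ℕ, w = ω a b1 ^ s * ω a b2 ^ t) ∧
      f a = 1 ∧ f b1 = 1 ∧ f b2 = 1 ∧
      ((d = 3 ∧ ∀ v, ∃ x y z : ℕ, v = a ^ x * b1 ^ y * b2 ^ z) ∨
       (d = 4 ∧ ∃ r, (∀ u, ω r u = 1) ∧ f r = 1 ∧
          ∀ v, ∃ x y z t : ℕ, v = a ^ x * b1 ^ y * b2 ^ z * r ^ t)) :=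
  lin_add (V := Additive V) (W := Additive W) (P := Additive P) tV tW tP cV hd cW cP ω ω1 ω2
    β β1 β2 hω (add_closure (M := W) _ hs) (add_closure (M := P) _ hβ) jac f ε hf hβf

/-- commutative group from commuting elements -/
abbrev subComm {G : Type*} [Group G] (N : Subgroup G) (h : ∀ a ∈ N, ∀ b ∈ N, a * b = b * a) :
    CommGroup N :=
  { (inferInstance : Group N) with mul_comm := fun a b => Subtype.ext (h a a.2 b b.2) }

theorem sub_closure {G : Type*} [Group G] (N : Subgroup G) (S : Set N)
    (hS : N ≤ Subgroup.closure (Subtype.val '' S)) : Subgroup.closure S = ⊤ := by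
  rw [eq_top_iff]
  intro x _
  have h1 : Subgroup.closure (Subtype.val '' S) = (Subgroup.closure S).map N.subtype := by
    rw [MonoidHom.map_closure]; rfl
  rw [h1] at hS
  obtain ⟨y, hy, hyx⟩ := hS x.2
  have : y = x := Subtype.ext hyx
  exact this ▸ hy

section
variable {H : Type u} {G : Type v} [Group H] [Group G] {π : H →* G}

theorem CExt.comm_mul_left (h : CExt π) {x x' : H} (hx : ∀ g, π x' * g = g * π x') (z : H) :
    ⁅x * x', z⁆ = ⁅x, z⁆ * ⁅x', z⁆ := by
  have h1 := h.cen _ (h.comm_ker hx z)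
  have : ⁅x * x', z⁆ = x * ⁅x', z⁆ * (z * x⁻¹ * z⁻¹) := by
    simp [commutatorElement_def, mul_assoc]
  rw [this, ← h1, commutatorElement_def x z, mul_assoc, h1]
  group

theorem pow_mul_class2 {G : Type*} [Group G] (hc : ∀ a b c : G, ⁅a, b⁆ * c = c * ⁅a, b⁆)
    (g h : G) (n : ℕ) : (g * h) ^ n = g ^ n * h ^ n * ⁅h, g⁆ ^ (n.choose 2) := by
  have hq : ∀ n : ℕ, h ^ n * g = g * h ^ n * ⁅h, g⁆ ^ n := by
    intro n
    induction n with
    | zero => simp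
    | succ n ih =>
      have e : h * g = ⁅h, g⁆ * (g * h) := by simp [commutatorElement_def, mul_assoc]
      have e2 : ∀ c, ⁅h, g⁆ ^ n * c = c * ⁅h, g⁆ ^ n := fun c => (Commute.pow_left (hc h g c) n).eq
      calc h ^ (n + 1) * g = h ^ n * (h * g) := by rw [pow_succ, mul_assoc]
        _ = ⁅h, g⁆ * (h ^ n * g) * h := by rw [e, ← mul_assoc, ← hc]; group
        _ = ⁅h, g⁆ * (g * h ^ n * (⁅h, g⁆ ^ n * h)) := by rw [ih]; group
        _ = _ := by rw [e2, hc, pow_succ h, pow_succ ⁅h, g⁆]; group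
  induction n with
  | zero => simp
  | succ n ih =>
    have e2 : ∀ m c, ⁅h, g⁆ ^ m * c = c * ⁅h, g⁆ ^ m := fun m c => (Commute.pow_left (hc h g c) m).eq
    calc (g * h) ^ (n + 1) = g ^ n * h ^ n * (⁅h, g⁆ ^ (n.choose 2) * (g * h)) := by
          rw [pow_succ, ih]; group
      _ = g ^ n * (h ^ n * g) * h * ⁅h, g⁆ ^ (n.choose 2) := by rw [e2]; group
      _ = g ^ n * g * h ^ n * (⁅h, g⁆ ^ n * h) * ⁅h, g⁆ ^ (n.choose 2) := by rw [hq]; group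
      _ = g ^ (n + 1) * h ^ (n + 1) * (⁅h, g⁆ ^ n * ⁅h, g⁆ ^ (n.choose 2)) := by
          rw [e2, pow_succ, pow_succ]; group
      _ = _ := by
          rw [← pow_add]
          congr 2
          rw [Nat.choose_succ_succ' n 1, Nat.choose_one_right]

end


section
variable {H : Type u} {G : Type v} [Group H] [Group G] {π : H →* G}

theorem group_struct (h : CExt π) {p n : ℕ} [hp : Fact p.Prime] (hG : Nat.card G = p ^ n)
    (hn : 5 ≤ n) (hG' : Nat.card (commutator G) = p ^ 2)
    (hpow : ∀ g : G, g ^ p ∈ commutator G) (hcen : commutator G ≤ Subgroup.center G)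
    (hbig : p ^ (n - 1) ≤ Nat.card (⁅commutator H, (⊤ : Subgroup H)⁆ : Subgroup H)) :
    p ≠ 2 ∧ (∀ w ∈ commutator G, w ^ p = 1) ∧ ∃ a b1 b2 : G, b1 * b2 = b2 * b1 ∧
      (∀ w ∈ commutator G, ∃ s t : ℕ, w = ⁅a, b1⁆ ^ s * ⁅a, b2⁆ ^ t) ∧
      a ^ p = 1 ∧ b1 ^ p = 1 ∧ b2 ^ p = 1 ∧
      ((n = 5 ∧ ∀ g, ∃ x y z : ℕ, ∃ w ∈ commutator G, g = a ^ x * b1 ^ y * b2 ^ z * w) ∨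
       (n = 6 ∧ ∃ r : G, (∀ u, r * u = u * r) ∧ r ^ p = 1 ∧
          ∀ g, ∃ x y z t : ℕ, ∃ w ∈ commutator G, g = a ^ x * b1 ^ y * b2 ^ z * r ^ t * w)) := by
  have hcc : ∀ w ∈ commutator G, ∀ g, w * g = g * w := fun w hw g =>
    (Subgroup.mem_center_iff.mp (hcen hw) g).symm
  have hcm : ∀ g k : G, ⁅g, k⁆ ∈ commutator G := fun g k =>
    Subgroup.commutator_mem_commutator (Subgroup.mem_top _) (Subgroup.mem_top _)
  have hof : ∀ g : G, Abelianization.of g = 1 ↔ g ∈ commutator G := by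
    intro g
    rw [← MonoidHom.mem_ker, Abelianization.ker_of]
  have hq : CExt (Abelianization.of (G := G)) := by
    refine ⟨QuotientGroup.mk_surjective, ?_⟩
    intro a ha y
    exact hcc a ((hof a).mp ha) y
  have hqx : ∀ x : G, ∀ g, Abelianization.of x * g = g * Abelianization.of x :=
    fun x g => mul_comm _ _
  -- exponent of commutator subgroup
  have hexp : ∀ w ∈ commutator G, w ^ p = 1 := by
    let i := subComm (commutator G) (fun a ha b _ => hcc a ha b)
    let K : Subgroup G := (powMonoidHom (α := commutator G) p).ker.map (commutator G).subtype
    have hK : commutator G ≤ K := by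
      conv_lhs => rw [commutator_def]
      rw [Subgroup.commutator_le]
      intro g _ k _
      refine ⟨⟨⁅g, k⁆, hcm g k⟩, ?_, rfl⟩
      apply Subtype.ext
      change ⁅g, k⁆ ^ p = 1
      have := hq.zpow_left (hqx g) k p
      rw [zpow_natCast, zpow_natCast] at this
      rw [← this, commutatorElement_eq_one_iff_mul_comm]
      exact hcc _ (hpow g) k
    intro w hw
    obtain ⟨x, hx, rfl⟩ := hK hw
    exact congrArg Subtype.val (MonoidHom.mem_ker.mp hx)
  obtain ⟨σ, hσ⟩ : ∃ σ : Abelianization G → G, ∀ v, Abelianization.of (σ v) = v :=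
    ⟨_, Function.surjInv_eq hq.surj⟩
  obtain ⟨τ, hτ⟩ : ∃ τ : G → H, ∀ g, π (τ g) = g := ⟨_, Function.surjInv_eq h.surj⟩
  have hσG : ∀ g : G, ∃ w ∈ commutator G, σ (Abelianization.of g) * w = g := by
    intro g
    refine ⟨(σ (Abelianization.of g))⁻¹ * g, ?_, by group⟩
    rw [← hof, map_mul, map_inv, hσ]; simp
  -- membership in the third term
  have s2 : ∀ x, π x ∈ commutator G → ∀ y, ⁅x, y⁆ ∈ ⁅commutator H, (⊤ : Subgroup H)⁆ := by
    intro x hx y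
    rw [← map_comm_surj h.surj] at hx
    obtain ⟨z, hz, hzx⟩ := hx
    rw [h.congr (x' := z) (y' := y) hzx.symm rfl]
    exact Subgroup.commutator_mem_commutator hz (Subgroup.mem_top _)
  have s3 : ∀ x ∈ ⁅commutator H, (⊤ : Subgroup H)⁆, π x = 1 := by
    have : ⁅commutator H, (⊤ : Subgroup H)⁆ ≤ π.ker := by
      rw [Subgroup.commutator_le]
      intro g hg k _
      rw [MonoidHom.mem_ker, map_commutatorElement, commutatorElement_eq_one_iff_mul_comm]
      apply hcc
      rw [← map_comm_surj h.surj]; exact ⟨g, hg, rfl⟩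
    exact this
  have hcx : ∀ y : H, π y ∈ commutator G → ∀ g, π y * g = g * π y := fun y hy g => hcc _ hy g
  -- congruence
  have bc : ∀ y y' x x' : H, π y = π y' → π y ∈ commutator G →
      Abelianization.of (π x) = Abelianization.of (π x') → ⁅y, x⁆ = ⁅y', x'⁆ := by
    intro y y' x x' hy hyc hx
    have e1 : ⁅y, x⁆ = ⁅y, x'⁆ := by
      have hw : π (x'⁻¹ * x) ∈ commutator G := by
        rw [← hof, map_mul, map_mul, hx, map_inv, map_inv]; simp
      have : x = x' * (x'⁻¹ * x) := by group
      rw [this, h.comm_mul (hcx y hyc), cHom_comm h (hcx y hyc) hw, mul_one]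
    rw [e1]
    exact h.congr hy rfl
  let iW := subComm (commutator G) (fun a ha b _ => hcc a ha b)
  let iP := subComm (⁅commutator H, (⊤ : Subgroup H)⁆ : Subgroup H)
    (fun a ha b _ => h.cen a (s3 a ha) b)
  let ω : Abelianization G → Abelianization G → commutator G :=
    fun u v => ⟨⁅σ u, σ v⁆, hcm _ _⟩
  let β : Abelianization G → commutator G → (⁅commutator H, (⊤ : Subgroup H)⁆ : Subgroup H) :=
    fun v w => ⟨⁅τ w, τ (σ v)⁆, s2 _ (by rw [hτ]; exact w.2) _⟩
  have hβ1 : ∀ v w, (β v w : H) = ⁅τ w, τ (σ v)⁆ := fun v w => rfl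
  have hω1 : ∀ v w, (ω v w : G) = ⁅σ v, σ w⁆ := fun v w => rfl
  let f : Abelianization G → commutator G := fun v => ⟨σ v ^ p, hpow _⟩
  have main := lin_mul (p := p) (d := n - 2) (V := Abelianization G) (W := commutator G)
    (P := (⁅commutator H, (⊤ : Subgroup H)⁆ : Subgroup H)) ?_ ?_ ?_ ?_ (by omega) hG' ?_
    ω ?_ ?_ β ?_ ?_ ?_ ?_ ?_ ?_ f (p.choose 2) ?_ ?_
  · obtain ⟨hε, a, b1, b2, k1, k2, k3, k4, k5, k6⟩ := main
    refine ⟨?_, hexp, σ a, σ b1, σ b2, ?_, ?_, ?_, ?_, ?_, ?_⟩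
    · rintro rfl
      revert hε; decide
    · exact commutatorElement_eq_one_iff_mul_comm.mp (congrArg Subtype.val k1)
    · intro w hw
      obtain ⟨s, t, hst⟩ := k2 ⟨w, hw⟩
      exact ⟨s, t, congrArg Subtype.val hst⟩
    · exact congrArg Subtype.val k3
    · exact congrArg Subtype.val k4
    · exact congrArg Subtype.val k5
    · rcases k6 with ⟨hd, k7⟩ | ⟨hd, r, hr, fr, k7⟩
      · left
        refine ⟨by omega, fun g => ?_⟩
        obtain ⟨x, y, z, hg⟩ := k7 (Abelianization.of g)
        refine ⟨x, y, z, (σ a ^ x * σ b1 ^ y * σ b2 ^ z)⁻¹ * g, ?_, by group⟩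
        rw [← hof]
        simp only [map_mul, map_inv, map_pow, hσ]
        rw [← hg]; simp
      · right
        refine ⟨by omega, σ r, ?_, congrArg Subtype.val fr, fun g => ?_⟩
        · intro u
          obtain ⟨w, hw, hu⟩ := hσG u
          have h1 : ⁅σ r, σ (Abelianization.of u)⁆ = 1 := congrArg Subtype.val (hr _)
          rw [commutatorElement_eq_one_iff_mul_comm] at h1
          rw [← hu, ← mul_assoc, h1, mul_assoc, mul_assoc, hcc w hw]
        · obtain ⟨x, y, z, t, hg⟩ := k7 (Abelianization.of g)
          refine ⟨x, y, z, t, (σ a ^ x * σ b1 ^ y * σ b2 ^ z * σ r ^ t)⁻¹ * g, ?_, by group⟩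
          rw [← hof]
          simp only [map_mul, map_inv, map_pow, hσ]
          rw [← hg]; simp
  · intro v
    obtain ⟨g, rfl⟩ := hq.surj v
    rw [← map_pow, hof]; exact hpow g
  · intro w
    exact Subtype.ext (hexp w w.2)
  · have : ∀ x : (⁅commutator H, (⊤ : Subgroup H)⁆ : Subgroup H),
        x ∈ (powMonoidHom (α := (⁅commutator H, (⊤ : Subgroup H)⁆ : Subgroup H)) p).ker := by
      have h1 : (⁅commutator H, (⊤ : Subgroup H)⁆ : Subgroup H) ≤
          (powMonoidHom (α := (⁅commutator H, (⊤ : Subgroup H)⁆ : Subgroup H)) p).ker.map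
            (⁅commutator H, (⊤ : Subgroup H)⁆ : Subgroup H).subtype := by
        conv_lhs => rw [Subgroup.commutator_def]
        rw [Subgroup.closure_le]
        rintro _ ⟨g, hg, k, _, rfl⟩
        have hg' : π g ∈ commutator G := by
          rw [← map_comm_surj h.surj]; exact ⟨g, hg, rfl⟩
        refine ⟨⟨⁅g, k⁆, s2 _ hg' k⟩, ?_, rfl⟩
        apply Subtype.ext
        change ⁅g, k⁆ ^ p = 1
        have := h.zpow_left (hcx g hg') k p
        rw [zpow_natCast, zpow_natCast] at this
        rw [← this, commutatorElement_eq_one_iff_mul_comm]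
        apply h.cen
        rw [map_pow]; exact hexp _ hg'
      intro x
      obtain ⟨y, hy, hyx⟩ := h1 x.2
      have : y = x := Subtype.ext hyx
      exact this ▸ hy
    exact fun x => MonoidHom.mem_ker.mp (this x)
  · exact (card_quot_comm hp.out hG _ hG').2
  · rw [show n - 2 + 1 = n - 1 by omega]; exact hbig
  · intro x x' y
    apply Subtype.ext
    change ⁅σ (x * x'), σ y⁆ = ⁅σ x, σ y⁆ * ⁅σ x', σ y⁆
    rw [← hq.comm_mul_left (hqx _)]
    exact hq.congr (by rw [map_mul, hσ, hσ, hσ]) rfl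
  · intro x y y'
    apply Subtype.ext
    change ⁅σ x, σ (y * y')⁆ = ⁅σ x, σ y⁆ * ⁅σ x, σ y'⁆
    rw [← hq.comm_mul (hqx _)]
    exact hq.congr rfl (by rw [map_mul, hσ, hσ, hσ])
  · intro x x' y
    apply Subtype.ext
    change ⁅τ y, τ (σ (x * x'))⁆ = ⁅τ y, τ (σ x)⁆ * ⁅τ y, τ (σ x')⁆
    have hy : π (τ y) ∈ commutator G := by rw [hτ]; exact y.2
    rw [← h.comm_mul (hcx _ hy)]
    exact bc _ _ _ _ rfl hy (by rw [map_mul, map_mul, hτ, hτ, hτ, hσ, hσ, hσ])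
  · intro x y y'
    apply Subtype.ext
    change ⁅τ (y * y' : G), τ (σ x)⁆ = ⁅τ y, τ (σ x)⁆ * ⁅τ y', τ (σ x)⁆
    rw [← h.comm_mul_left (hcx _ (by rw [hτ]; exact y'.2))]
    exact h.congr (by rw [map_mul, hτ, hτ, hτ]) rfl
  · intro v
    apply Subtype.ext
    exact commutatorElement_self _
  · apply sub_closure
    conv_lhs => rw [commutator_def, Subgroup.commutator_def]
    rw [Subgroup.closure_le]
    rintro _ ⟨g, _, k, _, rfl⟩
    apply Subgroup.subset_closure
    refine ⟨_, ⟨Abelianization.of g, Abelianization.of k, rfl⟩, ?_⟩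
    change ⁅σ _, σ _⁆ = _
    exact hq.congr (hσ _) (hσ _)
  · apply sub_closure
    conv_lhs => rw [Subgroup.commutator_def]
    rw [Subgroup.closure_le]
    rintro _ ⟨g, hg, k, _, rfl⟩
    have hg' : π g ∈ commutator G := by
      rw [← map_comm_surj h.surj]; exact ⟨g, hg, rfl⟩
    apply Subgroup.subset_closure
    refine ⟨_, ⟨Abelianization.of (π k), ⟨π g, hg'⟩, rfl⟩, ?_⟩
    change ⁅τ (π g), τ (σ _)⁆ = _
    exact bc _ _ _ _ (hτ _) (by rw [hτ]; exact hg') (by rw [hτ, hσ])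
  · intro x y z
    apply Subtype.ext
    change ⁅τ ⁅σ y, σ z⁆, τ (σ x)⁆ * ⁅τ ⁅σ z, σ x⁆, τ (σ y)⁆ * ⁅τ ⁅σ x, σ y⁆, τ (σ z)⁆ = 1
    have e : ∀ u v w, ⁅τ ⁅σ u, σ v⁆, τ (σ w)⁆ = ⁅⁅τ (σ u), τ (σ v)⁆, τ (σ w)⁆ := fun u v w =>
      h.congr (by rw [map_commutatorElement, hτ, hτ, hτ]) rfl
    rw [e, e, e]
    exact h.jacobi hcen _ _ _
  · intro u v
    apply Subtype.ext
    change σ (u * v) ^ p = σ u ^ p * σ v ^ p * ⁅σ v, σ u⁆ ^ (p.choose 2)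
    rw [← pow_mul_class2 (fun a b c => hcc _ (hcm a b) c)]
    obtain ⟨w, hw, hg⟩ := hσG (σ u * σ v)
    rw [map_mul, hσ, hσ] at hg
    rw [← hg, Commute.mul_pow (hcc w hw _).symm, hexp w hw, mul_one]
  · intro v
    apply Subtype.ext
    change ⁅τ (σ v ^ p), τ (σ v)⁆ = 1
    rw [h.congr (x' := τ (σ v) ^ p) (y' := τ (σ v)) (by rw [map_pow, hτ, hτ]) rfl,
      commutatorElement_eq_one_iff_mul_comm]
    exact (Commute.pow_left (Commute.refl _) p).eq
end


/-- the model action -/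
def thetaFun (p : ℕ) (x : ZMod p) (v : Fin 4 → Multiplicative (ZMod p)) :
    Fin 4 → Multiplicative (ZMod p) :=
  ![v 0, v 1, Multiplicative.ofAdd (x * (v 0).toAdd) * v 2,
    Multiplicative.ofAdd (x * (v 1).toAdd) * v 3]

theorem thetaFun_add (p : ℕ) (x y : ZMod p) (v : Fin 4 → Multiplicative (ZMod p)) :
    thetaFun p (x + y) v = thetaFun p x (thetaFun p y v) := by
  funext i
  fin_cases i <;> simp [thetaFun, add_mul, mul_assoc]

theorem thetaFun_zero (p : ℕ) (v : Fin 4 → Multiplicative (ZMod p)) :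
    thetaFun p 0 v = v := by
  funext i
  fin_cases i <;> simp [thetaFun]

theorem thetaFun_mul (p : ℕ) (x : ZMod p) (v w : Fin 4 → Multiplicative (ZMod p)) :
    thetaFun p x (v * w) = thetaFun p x v * thetaFun p x w := by
  funext i
  fin_cases i <;> simp [thetaFun, mul_add] <;> exact mul_mul_mul_comm _ _ _ _

/-- the model action -/
def theta (p : ℕ) : Multiplicative (ZMod p) →* MulAut (Fin 4 → Multiplicative (ZMod p)) where
  toFun x :=
    { toFun := thetaFun p x.toAdd
      invFun := thetaFun p (-x.toAdd)
      left_inv := fun v => by rw [← thetaFun_add, neg_add_cancel, thetaFun_zero]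
      right_inv := fun v => by rw [← thetaFun_add, add_neg_cancel, thetaFun_zero]
      map_mul' := thetaFun_mul p _ }
  map_one' := by
    ext1 v
    exact thetaFun_zero p v
  map_mul' x y := by
    ext1 v
    exact thetaFun_add p x.toAdd y.toAdd v

/-- the model group -/
abbrev KM (p : ℕ) := (Fin 4 → Multiplicative (ZMod p)) ⋊[theta p] Multiplicative (ZMod p)

/-- constructor in coordinates -/
def KM.mk (p : ℕ) (x y1 y2 z1 z2 : ZMod p) : KM p :=
  ⟨![Multiplicative.ofAdd y1, Multiplicative.ofAdd y2, Multiplicative.ofAdd z1,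
    Multiplicative.ofAdd z2], Multiplicative.ofAdd x⟩

theorem KM.mk_mul (p : ℕ) (x y1 y2 z1 z2 x' y1' y2' z1' z2' : ZMod p) :
    KM.mk p x y1 y2 z1 z2 * KM.mk p x' y1' y2' z1' z2' =
      KM.mk p (x + x') (y1 + y1') (y2 + y2') (z1 + z1' + x * y1') (z2 + z2' + x * y2') := by
  refine SemidirectProduct.ext ?_ rfl
  funext i
  change _ * thetaFun p x _ i = _
  fin_cases i
  · rfl
  · rfl
  · change Multiplicative.ofAdd (z1 + (x * y1' + z1')) = Multiplicative.ofAdd _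
    congr 1; ring
  · change Multiplicative.ofAdd (z2 + (x * y2' + z2')) = Multiplicative.ofAdd _
    congr 1; ring

theorem KM.mk_surj (p : ℕ) (k : KM p) : ∃ x y1 y2 z1 z2, k = KM.mk p x y1 y2 z1 z2 := by
  refine ⟨k.right.toAdd, (k.left 0).toAdd, (k.left 1).toAdd, (k.left 2).toAdd, (k.left 3).toAdd,
    SemidirectProduct.ext ?_ rfl⟩
  funext i
  fin_cases i <;> rfl

theorem KM.mk_inj (p : ℕ) {x y1 y2 z1 z2 x' y1' y2' z1' z2' : ZMod p}
    (h : KM.mk p x y1 y2 z1 z2 = KM.mk p x' y1' y2' z1' z2') :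
    x = x' ∧ y1 = y1' ∧ y2 = y2' ∧ z1 = z1' ∧ z2 = z2' := by
  have h1 := congrArg SemidirectProduct.right h
  have h2 := congrArg SemidirectProduct.left h
  exact ⟨h1, congrFun h2 0, congrFun h2 1, congrFun h2 2, congrFun h2 3⟩

theorem KM.one_eq (p : ℕ) : (1 : KM p) = KM.mk p 0 0 0 0 0 := by
  refine SemidirectProduct.ext ?_ rfl
  funext i
  fin_cases i <;> rfl

theorem KM.card (p : ℕ) [Fact p.Prime] : Nat.card (KM p) = p ^ 5 := by
  rw [Nat.card_congr SemidirectProduct.equivProd, Nat.card_prod, Nat.card_fun]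
  have : Nat.card (Multiplicative (ZMod p)) = p := Nat.card_zmod p
  rw [this, Nat.card_fin]
  ring

/-- the obvious central subgroup -/
def KM.Z (p : ℕ) : Subgroup (KM p) where
  carrier := {k | ∃ z1 z2, k = KM.mk p 0 0 0 z1 z2}
  one_mem' := ⟨0, 0, KM.one_eq p⟩
  mul_mem' := by
    rintro _ _ ⟨a, b, rfl⟩ ⟨c, d, rfl⟩
    refine ⟨a + c, b + d, ?_⟩
    rw [KM.mk_mul]; simp
  inv_mem' := by
    rintro _ ⟨a, b, rfl⟩
    refine ⟨-a, -b, ?_⟩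
    rw [inv_eq_iff_mul_eq_one, KM.mk_mul, KM.one_eq]; simp

theorem KM.card_Z (p : ℕ) [Fact p.Prime] : Nat.card (KM.Z p) = p ^ 2 := by
  have : Nat.card (KM.Z p) = Nat.card (ZMod p × ZMod p) := by
    refine (Nat.card_congr (Equiv.ofBijective
      (fun z : ZMod p × ZMod p => (⟨KM.mk p 0 0 0 z.1 z.2, z.1, z.2, rfl⟩ : KM.Z p))
      ⟨?_, ?_⟩)).symm
    · intro a b h
      have := KM.mk_inj p (congrArg Subtype.val h)
      exact Prod.ext this.2.2.2.1 this.2.2.2.2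
    · rintro ⟨_, a, b, rfl⟩
      exact ⟨(a, b), rfl⟩
  rw [this, Nat.card_prod, Nat.card_zmod]; ring

theorem KM.center_eq (p : ℕ) [Fact p.Prime] : Subgroup.center (KM p) = KM.Z p := by
  ext k
  rw [Subgroup.mem_center_iff]
  constructor
  · intro h
    obtain ⟨x, y1, y2, z1, z2, rfl⟩ := KM.mk_surj p k
    have h1 := h (KM.mk p 1 0 0 0 0)
    have h2 := h (KM.mk p 0 1 0 0 0)
    rw [KM.mk_mul, KM.mk_mul] at h1 h2
    have h1 := KM.mk_inj p h1
    have h2 := KM.mk_inj p h2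
    simp at h1 h2
    refine ⟨z1, z2, ?_⟩
    rw [h1.2.1, h1.2.2, h2.2]
  · rintro ⟨z1, z2, rfl⟩ g
    obtain ⟨x, y1, y2, z1, z2, rfl⟩ := KM.mk_surj p g
    rw [KM.mk_mul, KM.mk_mul]
    simp [add_comm]

theorem KM.comm_eq (p : ℕ) [Fact p.Prime] : commutator (KM p) = KM.Z p := by
  apply le_antisymm
  · rw [commutator_def, Subgroup.commutator_def, Subgroup.closure_le]
    rintro _ ⟨g, -, k, -, rfl⟩
    obtain ⟨x, y1, y2, z1, z2, rfl⟩ := KM.mk_surj p g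
    obtain ⟨x', y1', y2', z1', z2', rfl⟩ := KM.mk_surj p k
    refine ⟨x * y1' - x' * y1, x * y2' - x' * y2, ?_⟩
    rw [commutatorElement_def, mul_inv_eq_iff_eq_mul, mul_inv_eq_iff_eq_mul]
    simp only [KM.mk_mul]
    congr 1 <;> ring
  · rintro _ ⟨z1, z2, rfl⟩
    have : KM.mk p 0 0 0 z1 z2 = ⁅KM.mk p 1 0 0 0 0, KM.mk p 0 z1 z2 0 0⁆ := by
      symm
      rw [commutatorElement_def, mul_inv_eq_iff_eq_mul, mul_inv_eq_iff_eq_mul]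
      simp only [KM.mk_mul]
      congr 1 <;> ring
    rw [this, commutator_def]
    exact Subgroup.commutator_mem_commutator (Subgroup.mem_top _) (Subgroup.mem_top _)

/-- powers by residues -/
def zp {G : Type*} [Group G] {p : ℕ} (g : G) (x : ZMod p) : G := g ^ x.val

theorem zp_cast {G : Type*} [Group G] {p : ℕ} {g : G} (hg : g ^ p = 1) (m : ℕ) :
    zp g (m : ZMod p) = g ^ m := by
  rw [zp, ZMod.val_natCast, ← pow_mod_orderOf g (m % p), ← pow_mod_orderOf g m,
    Nat.mod_mod_of_dvd _ (orderOf_dvd_of_pow_eq_one hg)]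

theorem zp_add {G : Type*} [Group G] {p : ℕ} [NeZero p] {g : G} (hg : g ^ p = 1) (x y : ZMod p) :
    zp g (x + y) = zp g x * zp g y := by
  rw [← ZMod.natCast_zmod_val x, ← ZMod.natCast_zmod_val y, ← Nat.cast_add, zp_cast hg,
    zp_cast hg, zp_cast hg, pow_add]

theorem zp_comm {G : Type*} [Group G] {p : ℕ} {g h : G} (hg : Commute g h) (x y : ZMod p) :
    Commute (zp g x) (zp h y) := hg.pow_pow _ _

theorem pow_swap {G : Type*} [Group G] {a b c : G} (hc : ∀ g, Commute c g)
    (h : a * b = c * b * a) (m n : ℕ) : a ^ m * b ^ n = c ^ (m * n) * b ^ n * a ^ m := by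
  have h1 : ∀ n, a * b ^ n = c ^ n * b ^ n * a := by
    intro n
    induction n with
    | zero => simp
    | succ n ih =>
      calc a * b ^ (n+1) = (a * b ^ n) * b := by rw [pow_succ, mul_assoc]
        _ = c ^ n * b ^ n * (c * b * a) := by rw [ih, mul_assoc, h]
        _ = c ^ n * (b ^ n * c) * b * a := by simp only [mul_assoc]
        _ = c ^ (n+1) * b ^ (n+1) * a := by
          rw [← (hc (b ^ n)).eq]; simp only [mul_assoc, pow_succ]
  induction m with
  | zero => simp
  | succ m ih =>
    calc a ^ (m+1) * b ^ n = a * (a ^ m * b ^ n) := by rw [pow_succ', mul_assoc]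
      _ = (a * c ^ (m*n)) * (b ^ n * a ^ m) := by rw [ih]; simp only [mul_assoc]
      _ = c ^ (m*n) * (a * b ^ n) * a ^ m := by
        rw [← ((hc a).pow_left (m*n)).eq]; simp only [mul_assoc]
      _ = c ^ ((m + 1)*n) * b ^ n * a ^ (m+1) := by
        rw [h1, add_mul, one_mul, pow_add, pow_succ']; simp only [mul_assoc]

theorem zp_swap {G : Type*} [Group G] {p : ℕ} [NeZero p] {a b c : G} (hc : ∀ g, Commute c g)
    (hcp : c ^ p = 1) (h : a * b = c * b * a) (x y : ZMod p) :
    zp a x * zp b y = zp c (x * y) * zp b y * zp a x := by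
  rw [zp, zp, pow_swap hc h, ← zp_cast hcp]
  simp

section
variable {G : Type*} [Group G] {p : ℕ} [NeZero p] {a b1 b2 c1 c2 : G}

/-- the map out of the model -/
def modelFun (a b1 b2 c1 c2 : G) (k : KM p) : G :=
  zp c1 (k.left 2).toAdd * zp c2 (k.left 3).toAdd * zp b1 (k.left 0).toAdd *
    zp b2 (k.left 1).toAdd * zp a k.right.toAdd

theorem modelFun_mk (x y1 y2 z1 z2 : ZMod p) : modelFun a b1 b2 c1 c2 (KM.mk p x y1 y2 z1 z2) =
    zp c1 z1 * zp c2 z2 * zp b1 y1 * zp b2 y2 * zp a x := rfl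

theorem modelFun_mul (hc1 : ∀ g, Commute c1 g) (hc2 : ∀ g, Commute c2 g)
    (ha : a ^ p = 1) (hb1 : b1 ^ p = 1) (hb2 : b2 ^ p = 1) (hp1 : c1 ^ p = 1) (hp2 : c2 ^ p = 1)
    (h1 : a * b1 = c1 * b1 * a) (h2 : a * b2 = c2 * b2 * a) (hb : Commute b1 b2) (k l : KM p) :
    modelFun a b1 b2 c1 c2 (k * l) = modelFun a b1 b2 c1 c2 k * modelFun a b1 b2 c1 c2 l := by
  obtain ⟨x, y1, y2, z1, z2, rfl⟩ := KM.mk_surj p k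
  obtain ⟨x', y1', y2', z1', z2', rfl⟩ := KM.mk_surj p l
  rw [KM.mk_mul]
  simp only [modelFun_mk]
  have C1 : ∀ s : ZMod p, ∀ g, g * zp c1 s = zp c1 s * g := fun s g => ((hc1 g).pow_left _).eq.symm
  have C2 : ∀ s : ZMod p, ∀ g, g * zp c2 s = zp c2 s * g := fun s g => ((hc2 g).pow_left _).eq.symm
  have S1 := zp_swap hc1 hp1 h1 x y1'
  have S2 := zp_swap hc2 hp2 h2 x y2'
  have B := (zp_comm hb y1' y2).eq
  rw [zp_add hp1, zp_add hp1, zp_add hp2, zp_add hp2, zp_add hb1, zp_add hb2, zp_add ha]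
  symm
  calc zp c1 z1 * zp c2 z2 * zp b1 y1 * zp b2 y2 * zp a x *
        (zp c1 z1' * zp c2 z2' * zp b1 y1' * zp b2 y2' * zp a x')
      = zp c1 z1 * zp c2 z2 * zp b1 y1 * zp b2 y2 * ((zp a x * zp c1 z1') * zp c2 z2') *
        (zp b1 y1' * zp b2 y2' * zp a x') := by simp only [mul_assoc]
    _ = zp c1 z1 * zp c2 z2 * zp b1 y1 * zp b2 y2 * (zp c1 z1' * zp c2 z2') *
        ((zp a x * zp b1 y1') * zp b2 y2' * zp a x') := by
          rw [C1 z1' (zp a x), mul_assoc (zp c1 z1') (zp a x) _, C2 z2' (zp a x)]; simp only [mul_assoc]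
    _ = zp c1 z1 * zp c2 z2 * zp b1 y1 * zp b2 y2 * (zp c1 z1' * zp c2 z2') *
        (zp c1 (x * y1') * zp b1 y1' * (zp a x * zp b2 y2') * zp a x') := by
          rw [S1]; simp only [mul_assoc]
    _ = zp c1 z1 * zp c2 z2 * zp b1 y1 * zp b2 y2 * (zp c1 z1' * zp c2 z2') *
        (zp c1 (x * y1') * (zp b1 y1' * zp c2 (x * y2')) * zp b2 y2' * zp a x * zp a x') := by
          rw [S2]; simp only [mul_assoc]
    _ = zp c1 z1 * zp c2 z2 * (zp b1 y1 * zp b2 y2) * (zp c1 z1' * zp c2 z2' *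
        zp c1 (x * y1') * zp c2 (x * y2')) * (zp b1 y1' * zp b2 y2' * zp a x * zp a x') := by
          rw [C2 (x * y2') (zp b1 y1')]; simp only [mul_assoc]
    _ = zp c1 z1 * zp c2 z2 * (zp c1 z1' * zp c2 z2' *
        zp c1 (x * y1') * zp c2 (x * y2')) * (zp b1 y1 * (zp b2 y2 * zp b1 y1') *
          zp b2 y2' * zp a x * zp a x') := by
          have Q : Commute (zp b1 y1 * zp b2 y2) (zp c1 z1' * zp c2 z2' *
            zp c1 (x * y1') * zp c2 (x * y2')) :=
            (((Commute.mul_right (C1 _ _) (C2 _ _)).mul_right (C1 _ _)).mul_right (C2 _ _))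
          rw [mul_assoc (zp c1 z1 * zp c2 z2), Q.eq]; simp only [mul_assoc]
    _ = _ := by
          rw [← B]
          have e1 : zp c2 z2 * (zp c1 z1' * zp c2 z2' * zp c1 (x * y1') * zp c2 (x * y2')) =
              zp c1 z1' * zp c1 (x * y1') * (zp c2 z2 * zp c2 z2' * zp c2 (x * y2')) := by
            rw [mul_assoc (zp c1 z1') (zp c2 z2'), C1 (x * y1') (zp c2 z2')]
            rw [← mul_assoc (zp c1 z1'), ← mul_assoc, ← mul_assoc,
              ← C2 z2 (zp c1 z1' * zp c1 (x * y1'))]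
            simp only [mul_assoc]
          rw [mul_assoc (zp c1 z1), e1]
          simp only [mul_assoc]
end


section
variable {G : Type*} [Group G] {p : ℕ} [NeZero p] {a b1 b2 c1 c2 : G}

theorem zp_zero (g : G) : zp g (0 : ZMod p) = 1 := by simp [zp]

theorem zp_one {g : G} (hg : g ^ p = 1) : zp g (1 : ZMod p) = g := by
  have := zp_cast hg 1
  simpa using this

theorem model_hom (hc1 : ∀ g, Commute c1 g) (hc2 : ∀ g, Commute c2 g)
    (ha : a ^ p = 1) (hb1 : b1 ^ p = 1) (hb2 : b2 ^ p = 1) (hp1 : c1 ^ p = 1) (hp2 : c2 ^ p = 1)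
    (h1 : a * b1 = c1 * b1 * a) (h2 : a * b2 = c2 * b2 * a) (hb : Commute b1 b2) :
    ∃ f : KM p →* G, a ∈ f.range ∧ b1 ∈ f.range ∧ b2 ∈ f.range ∧ c1 ∈ f.range ∧ c2 ∈ f.range := by
  refine ⟨MonoidHom.mk' (modelFun a b1 b2 c1 c2)
    (modelFun_mul hc1 hc2 ha hb1 hb2 hp1 hp2 h1 h2 hb), ⟨KM.mk p 1 0 0 0 0, ?_⟩,
    ⟨KM.mk p 0 1 0 0 0, ?_⟩, ⟨KM.mk p 0 0 1 0 0, ?_⟩, ⟨KM.mk p 0 0 0 1 0, ?_⟩,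
    ⟨KM.mk p 0 0 0 0 1, ?_⟩⟩ <;> rw [MonoidHom.mk'_apply, modelFun_mk] <;>
    simp [zp_zero, zp_one, *]
end

section
variable {G : Type*} [Group G] {p : ℕ} [Fact p.Prime]

theorem model_all (hcen : commutator G ≤ Subgroup.center G)
    (hexp : ∀ w ∈ commutator G, w ^ p = 1) {a b1 b2 : G} (hb : b1 * b2 = b2 * b1)
    (hgen : ∀ w ∈ commutator G, ∃ s t : ℕ, w = ⁅a, b1⁆ ^ s * ⁅a, b2⁆ ^ t)
    (ha : a ^ p = 1) (hb1 : b1 ^ p = 1) (hb2 : b2 ^ p = 1) :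
    ∃ f : KM p →* G, a ∈ f.range ∧ b1 ∈ f.range ∧ b2 ∈ f.range ∧ commutator G ≤ f.range := by
  have hm : ∀ x y : G, ⁅x, y⁆ ∈ commutator G := fun x y => by
    rw [commutator_def]
    exact Subgroup.commutator_mem_commutator (Subgroup.mem_top _) (Subgroup.mem_top _)
  have hc : ∀ x y g : G, Commute ⁅x, y⁆ g := fun x y g =>
    (Subgroup.mem_center_iff.mp (hcen (hm x y)) g).symm
  obtain ⟨f, h1, h2, h3, h4, h5⟩ := model_hom (p := p) (hc a b1) (hc a b2) ha hb1 hb2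
    (hexp _ (hm _ _)) (hexp _ (hm _ _)) (by simp [commutatorElement_def])
    (by simp [commutatorElement_def]) hb
  refine ⟨f, h1, h2, h3, fun w hw => ?_⟩
  obtain ⟨s, t, rfl⟩ := hgen w hw
  exact mul_mem (pow_mem h4 _) (pow_mem h5 _)

theorem equiv5 (hG : Nat.card G = p ^ 5) (hcen : commutator G ≤ Subgroup.center G)
    (hexp : ∀ w ∈ commutator G, w ^ p = 1) {a b1 b2 : G} (hb : b1 * b2 = b2 * b1)
    (hgen : ∀ w ∈ commutator G, ∃ s t : ℕ, w = ⁅a, b1⁆ ^ s * ⁅a, b2⁆ ^ t)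
    (ha : a ^ p = 1) (hb1 : b1 ^ p = 1) (hb2 : b2 ^ p = 1)
    (hall : ∀ g, ∃ x y z : ℕ, ∃ w ∈ commutator G, g = a^x*b1^y*b2^z*w) :
    Nonempty (G ≃* KM p) := by
  obtain ⟨f, h1, h2, h3, h4⟩ := model_all hcen hexp hb hgen ha hb1 hb2
  have hs : Function.Surjective f := by
    intro g
    obtain ⟨x, y, z, w, hw, rfl⟩ := hall g
    exact mul_mem (mul_mem (mul_mem (pow_mem h1 _) (pow_mem h2 _)) (pow_mem h3 _)) (h4 hw)
  have : Finite (KM p) := Nat.finite_of_card_ne_zero (by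
    rw [KM.card]; exact pow_ne_zero _ (Fact.out : p.Prime).ne_zero)
  exact ⟨(MulEquiv.ofBijective f ((Nat.bijective_iff_surjective_and_card f).mpr
    ⟨hs, by rw [KM.card, hG]⟩)).symm⟩

theorem equiv6 (hG : Nat.card G = p ^ 6) (hcen : commutator G ≤ Subgroup.center G)
    (hexp : ∀ w ∈ commutator G, w ^ p = 1) {a b1 b2 : G} (hb : b1 * b2 = b2 * b1)
    (hgen : ∀ w ∈ commutator G, ∃ s t : ℕ, w = ⁅a, b1⁆ ^ s * ⁅a, b2⁆ ^ t)
    (ha : a ^ p = 1) (hb1 : b1 ^ p = 1) (hb2 : b2 ^ p = 1) {r : G} (hr : ∀ u, r * u = u * r)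
    (hrp : r ^ p = 1)
    (hall : ∀ g, ∃ x y z t : ℕ, ∃ w ∈ commutator G, g = a^x*b1^y*b2^z*r^t*w) :
    Nonempty (G ≃* Multiplicative (ZMod p) × KM p) := by
  obtain ⟨f, h1, h2, h3, h4⟩ := model_all hcen hexp hb hgen ha hb1 hb2
  let F : Multiplicative (ZMod p) × KM p →* G := MonoidHom.mk'
    (fun k => zp r k.1.toAdd * f k.2) (by
      rintro ⟨x, k⟩ ⟨y, l⟩
      change zp r (x.toAdd + y.toAdd) * f (k * l) = zp r x.toAdd * f k * (zp r y.toAdd * f l)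
      rw [zp_add hrp, map_mul]
      have : Commute (zp r y.toAdd) (f k) := Commute.pow_left (hr (f k)) _
      rw [mul_assoc, mul_assoc, ← mul_assoc (zp r y.toAdd), this.eq]
      simp only [mul_assoc])
  have hle : f.range ≤ F.range := by
    rintro _ ⟨k, rfl⟩
    refine ⟨(1, k), ?_⟩
    change zp r (0 : ZMod p) * f k = f k
    rw [zp_zero, one_mul]
  have hr' : r ∈ F.range := by
    refine ⟨(Multiplicative.ofAdd 1, 1), ?_⟩
    change zp r (1 : ZMod p) * f 1 = r
    rw [zp_one hrp, map_one, mul_one]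
  have hs : Function.Surjective F := by
    intro g
    obtain ⟨x, y, z, t, w, hw, rfl⟩ := hall g
    exact mul_mem (mul_mem (mul_mem (mul_mem (pow_mem (hle h1) _) (pow_mem (hle h2) _))
      (pow_mem (hle h3) _)) (pow_mem hr' _)) (hle (h4 hw))
  have hcard : Nat.card (Multiplicative (ZMod p) × KM p) = p ^ 6 := by
    have : Nat.card (Multiplicative (ZMod p)) = p := Nat.card_zmod p
    rw [Nat.card_prod, KM.card, this]; ring
  have : Finite (Multiplicative (ZMod p) × KM p) := Nat.finite_of_card_ne_zero (by
    rw [hcard]; exact pow_ne_zero _ (Fact.out : p.Prime).ne_zero)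
  exact ⟨(MulEquiv.ofBijective F ((Nat.bijective_iff_surjective_and_card F).mpr
    ⟨hs, by rw [hcard, hG]⟩)).symm⟩
end

section

/-- extension by a cocycle -/
@[ext] structure CocExt {G : Type u} {A : Type} (f : G → G → A) where
  fst : G
  snd : A

/-- group structure -/
@[reducible] def cocGroup {G : Type u} {A : Type} [Group G] [AddCommGroup A] (f : G → G → A)
    (h1 : ∀ g, f 1 g = 0)
    (hf : ∀ g h k, f h k + f g (h * k) = f (g * h) k + f g h) : Group (CocExt f) :=
  letI : Mul (CocExt f) := ⟨fun a b => ⟨a.1 * b.1, a.2 + b.2 + f a.1 b.1⟩⟩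
  letI : One (CocExt f) := ⟨⟨1, 0⟩⟩
  letI : Inv (CocExt f) := ⟨fun a => ⟨a.1⁻¹, -a.2 - f a.1⁻¹ a.1⟩⟩
  Group.ofLeftAxioms
    (by
      intro a b c
      refine CocExt.ext (mul_assoc _ _ _) ?_
      change a.2 + b.2 + f a.1 b.1 + c.2 + f (a.1 * b.1) c.1 =
        a.2 + (b.2 + c.2 + f b.1 c.1) + f a.1 (b.1 * c.1)
      have := hf a.1 b.1 c.1
      rw [show a.2 + b.2 + f a.1 b.1 + c.2 + f (a.1 * b.1) c.1 =
        a.2 + b.2 + c.2 + (f (a.1 * b.1) c.1 + f a.1 b.1) by abel, ← this]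
      abel)
    (by
      intro a
      refine CocExt.ext (one_mul _) ?_
      change 0 + a.2 + f 1 a.1 = a.2
      rw [h1]; simp)
    (by
      intro a
      refine CocExt.ext (inv_mul_cancel _) ?_
      change -a.2 - f a.1⁻¹ a.1 + a.2 + f a.1⁻¹ a.1 = 0
      abel)

theorem coc_hom {G : Type u} {A : Type} [Group G] [AddCommGroup A] {H : Type u} [Group H]
    {π : H →* G} (hπ : CExt π)
    (huniv : ∀ (E : Type u) (_ : Group E) (ρ : E →* G), CExt ρ → ∃ ψ : H →* E, ∀ h, ρ (ψ h) = π h)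
    (f : G → G → A) (h1 : ∀ g, f 1 g = 0) (h1' : ∀ g, f g 1 = 0)
    (hf : ∀ g h k, f h k + f g (h * k) = f (g * h) k + f g h) :
    ∃ Φ : (π.ker ⊓ commutator H : Subgroup H) →* Multiplicative A,
      ∀ g h : G, g * h = h * g → Multiplicative.ofAdd (f g h - f h g) ∈ Φ.range := by
  letI := cocGroup f h1 hf
  have mfst : ∀ a b : CocExt f, (a * b).1 = a.1 * b.1 := fun _ _ => rfl
  have msnd : ∀ a b : CocExt f, (a * b).2 = a.2 + b.2 + f a.1 b.1 := fun _ _ => rfl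
  let ρ : CocExt f →* G := MonoidHom.mk' (fun a => a.1) mfst
  have hρ : CExt ρ := by
    refine ⟨fun g => ⟨⟨g, 0⟩, rfl⟩, fun a ha y => ?_⟩
    have ha : a.1 = 1 := ha
    refine CocExt.ext ?_ ?_
    · rw [mfst, mfst, ha, one_mul, mul_one]
    · rw [msnd, msnd, ha, h1, h1', add_comm a.2]
  obtain ⟨ψ, hψ⟩ := huniv _ _ ρ hρ
  have hk : ∀ x : (π.ker ⊓ commutator H : Subgroup H), (ψ x).1 = 1 := fun x => by
    have := hψ x
    rw [show π x = 1 from x.2.1] at this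
    exact this
  refine ⟨MonoidHom.mk' (fun x => Multiplicative.ofAdd (ψ x).2) ?_, ?_⟩
  · intro x y
    rw [← ofAdd_add]
    congr 1
    rw [Subgroup.coe_mul, map_mul, msnd, hk, h1, add_zero]
  · intro g h hgh
    obtain ⟨g', hg⟩ := hπ.surj g
    obtain ⟨h', hh⟩ := hπ.surj h
    have hm : ⁅g', h'⁆ ∈ π.ker ⊓ commutator H := by
      constructor
      · change π _ = 1
        rw [map_commutatorElement, hg, hh, commutatorElement_eq_one_iff_mul_comm, hgh]
      · rw [commutator_def]
        exact Subgroup.commutator_mem_commutator (Subgroup.mem_top _) (Subgroup.mem_top _)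
    refine ⟨⟨_, hm⟩, ?_⟩
    rw [MonoidHom.mk'_apply]
    congr 1
    have e : g' * h' = ⁅g', h'⁆ * (h' * g') := by simp [commutatorElement_def, mul_assoc]
    have e2 := congrArg (fun t => (ψ t).2) e
    have eg : (ψ g').1 = g := (hψ g').trans hg
    have eh : (ψ h').1 = h := (hψ h').trans hh
    have ec : (ψ ⁅g', h'⁆).1 = 1 := hk ⟨_, hm⟩
    simp only [map_mul, msnd, mfst, eg, eh, ec, h1] at e2
    change (ψ ⁅g', h'⁆).2 = _
    rw [eq_sub_iff_add_eq]
    have := congrArg (fun t => t - (ψ g').2 - (ψ h').2) e2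
    beta_reduce at this
    rw [show (ψ ⁅g', h'⁆).2 + f h g = (ψ ⁅g', h'⁆).2 + ((ψ h').2 + (ψ g').2 + f h g) + 0 - (ψ g').2 - (ψ h').2
      by abel, ← this]
    abel
end


/-- the universal cocycle in coordinates -/
def coc6 {p : ℕ} (t x y1 y2 z1 z2 x' y1' y2' z1' z2' : ZMod p) : Fin 6 → ZMod p :=
  ![x * z1' + t * (x * (x - 1)) * y1',
    x * z2' + t * (x * (x - 1)) * y2',
    z1 * y1' + x * (t * (y1' * (y1' - 1))),
    z2 * y2' + x * (t * (y2' * (y2' - 1))),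
    (z1 + z2) * (y1' + y2') + x * (t * ((y1' + y2') * (y1' + y2' - 1))),
    y1 * y2']

/-- cocycle on the model -/
def cocK {p : ℕ} (t : ZMod p) (k l : KM p) : Fin 6 → ZMod p :=
  coc6 t k.right.toAdd (k.left 0).toAdd (k.left 1).toAdd (k.left 2).toAdd (k.left 3).toAdd
    l.right.toAdd (l.left 0).toAdd (l.left 1).toAdd (l.left 2).toAdd (l.left 3).toAdd

theorem cocK_mk {p : ℕ} (t x y1 y2 z1 z2 x' y1' y2' z1' z2' : ZMod p) :
    cocK t (KM.mk p x y1 y2 z1 z2) (KM.mk p x' y1' y2' z1' z2') =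
      coc6 t x y1 y2 z1 z2 x' y1' y2' z1' z2' := rfl

theorem cocK_cocycle {p : ℕ} {t : ZMod p} (ht : 2 * t = 1) (g h k : KM p) :
    cocK t h k + cocK t g (h * k) = cocK t (g * h) k + cocK t g h := by
  obtain ⟨x, y1, y2, z1, z2, rfl⟩ := KM.mk_surj p g
  obtain ⟨x', y1', y2', z1', z2', rfl⟩ := KM.mk_surj p h
  obtain ⟨x'', y1'', y2'', z1'', z2'', rfl⟩ := KM.mk_surj p k
  simp only [KM.mk_mul, cocK_mk]
  funext i
  fin_cases i <;> simp [coc6]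
  · linear_combination (-x * x' * y1'') * ht
  · linear_combination (-x * x' * y2'') * ht
  · linear_combination (x * y1' * y1'') * ht
  · linear_combination (x * y2' * y2'') * ht
  · linear_combination (x * (y1' + y2') * (y1'' + y2'')) * ht
  · ring

theorem not_five {G : Type u} [Group G] {p : ℕ} [Fact p.Prime] (hp2 : p ≠ 2)
    {H : Type u} [Group H] {π : H →* G} (hπ : CExt π)
    (huniv : ∀ (E : Type u) (_ : Group E) (ρ : E →* G), CExt ρ → ∃ ψ : H →* E, ∀ h, ρ (ψ h) = π h)
    (e : G ≃* KM p) (hM : Nat.card (π.ker ⊓ commutator H : Subgroup H) = p ^ 5) : False := by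
  have hp : p.Prime := Fact.out
  obtain ⟨t, ht⟩ : ∃ t : ZMod p, 2 * t = 1 := by
    refine ⟨2⁻¹, mul_inv_cancel₀ ?_⟩
    intro h0
    have : ((2 : ℕ) : ZMod p) = 0 := by exact_mod_cast h0
    rw [ZMod.natCast_eq_zero_iff] at this
    exact hp2 ((Nat.prime_dvd_prime_iff_eq hp Nat.prime_two).mp this)
  obtain ⟨Φ, hΦ⟩ := coc_hom hπ huniv (fun g h => cocK t (e g) (e h))
    (by
      intro g
      obtain ⟨x, y1, y2, z1, z2, hg⟩ := KM.mk_surj p (e g)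
      simp only [map_one, hg, KM.one_eq, cocK_mk]
      funext i
      fin_cases i <;> simp [coc6])
    (by
      intro g
      obtain ⟨x, y1, y2, z1, z2, hg⟩ := KM.mk_surj p (e g)
      simp only [map_one, hg, KM.one_eq, cocK_mk]
      funext i
      fin_cases i <;> simp [coc6])
    (by
      intro g h k
      simp only [map_mul]
      exact cocK_cocycle ht _ _ _)
  have key : ∀ k l : KM p, k * l = l * k →
      Multiplicative.ofAdd (cocK t k l - cocK t l k) ∈ Φ.range := by
    intro k l hkl
    have := hΦ (e.symm k) (e.symm l) (by rw [← map_mul, hkl, map_mul])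
    simpa using this
  have hs : Function.Surjective Φ := by
    intro c
    change c ∈ Φ.range
    let d : Fin 6 → ZMod p := c.toAdd
    have k1 := key (KM.mk p 1 0 0 0 0) (KM.mk p 0 0 0 (d 0) 0) (by simp [KM.mk_mul])
    have k2 := key (KM.mk p 1 0 0 0 0) (KM.mk p 0 0 0 0 (d 1)) (by simp [KM.mk_mul])
    have k3 := key (KM.mk p 0 0 0 (d 2) 0) (KM.mk p 0 1 0 0 0) (by simp [KM.mk_mul])
    have k4 := key (KM.mk p 0 0 0 0 (d 3)) (KM.mk p 0 0 1 0 0) (by simp [KM.mk_mul])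
    have k5 := key (KM.mk p 0 0 0 (d 4 - d 2 - d 3) 0) (KM.mk p 0 0 1 0 0) (by simp [KM.mk_mul])
    have k6 := key (KM.mk p 0 (d 5) 0 0 0) (KM.mk p 0 0 1 0 0) (by simp [KM.mk_mul])
    have := mul_mem (mul_mem (mul_mem (mul_mem (mul_mem k1 k2) k3) k4) k5) k6
    convert this using 1
    simp only [← ofAdd_add, cocK_mk]
    change Multiplicative.ofAdd d = _
    congr 1
    funext i
    fin_cases i <;> simp [coc6]
  have hfin : Finite (π.ker ⊓ commutator H : Subgroup H) := Nat.finite_of_card_ne_zero (by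
    rw [hM]; exact pow_ne_zero _ hp.ne_zero)
  have hle := Nat.card_le_card_of_surjective Φ hs
  have hc : Nat.card (Multiplicative (Fin 6 → ZMod p)) = p ^ 6 := by
    change Nat.card (Fin 6 → ZMod p) = _
    rw [Nat.card_fun, Nat.card_zmod, Nat.card_fin]
  rw [hc, hM] at hle
  exact absurd ((Nat.pow_le_pow_iff_right hp.one_lt).mp hle) (by norm_num)

/-- **Theorem (classification, `|G'| = p²`, `n ≥ 5`).** Let `G` be a `p`-group of
order `p^n` with `n ≥ 5`, `|G'| = p²` and `s(G) = 2`. Then `p ≠ 2`, `n = 6` and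
`G ≅ ℤ_p × (ℤ_p⁴ ⋊_θ ℤ_p)`, where the semidirect product has derived subgroup of
order `p²` and center of order `p²`. -/
theorem classification_commutator_p_sq {p n : ℕ} (hp : p.Prime)
    {G : Type*} [Group G] (hG : Nat.card G = p ^ n) (hn : 5 ≤ n)
    (hG' : Nat.card (commutator G) = p ^ 2)
    (hM : Nat.card (SchurMultiplier G) = p ^ ((n - 1) * (n - 2) / 2 - 1)) :
    p ≠ 2 ∧ n = 6 ∧
    ∃ θ : Multiplicative (ZMod p) →* MulAut (Fin 4 → Multiplicative (ZMod p)),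
      Nat.card (commutator
        ((Fin 4 → Multiplicative (ZMod p)) ⋊[θ] Multiplicative (ZMod p))) = p ^ 2 ∧
      Nat.card (Subgroup.center
        ((Fin 4 → Multiplicative (ZMod p)) ⋊[θ] Multiplicative (ZMod p))) = p ^ 2 ∧
      Nonempty (G ≃* Multiplicative (ZMod p) ×
        ((Fin 4 → Multiplicative (ZMod p)) ⋊[θ] Multiplicative (ZMod p))) := by
  haveI : Fact p.Prime := ⟨hp⟩
  obtain ⟨H, _, π, hπ, hcard, huniv⟩ := hopf_ext G
  rw [hM] at hcard
  have hH : Nat.card (commutator H) = p ^ ((n-1)*(n-2)/2 + 1) := by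
    rw [hπ.card_comm, hG', hcard, ← pow_add]
    congr 1
    have : 4 * 3 ≤ (n-1)*(n-2) := Nat.mul_le_mul (by omega) (by omega)
    omega
  obtain ⟨hpow, hcen, hbig⟩ := stepA hπ hG hn hG' hH
  obtain ⟨hp2, hexp, a, b1, b2, hb, hgen, ha, hb1, hb2, hcase⟩ :=
    group_struct hπ hG hn hG' hpow hcen hbig
  refine ⟨hp2, ?_⟩
  rcases hcase with ⟨rfl, hall⟩ | ⟨rfl, r, hr, hrp, hall⟩
  · exfalso
    obtain ⟨e⟩ := equiv5 hG hcen hexp hb hgen ha hb1 hb2 hall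
    exact not_five hp2 hπ huniv e hcard
  · refine ⟨rfl, theta p, ?_, ?_, equiv6 hG hcen hexp hb hgen ha hb1 hb2 hr hrp hall⟩
    · exact (congrArg (fun S : Subgroup (KM p) => Nat.card S) (KM.comm_eq p)).trans (KM.card_Z p)
    · exact (congrArg (fun S : Subgroup (KM p) => Nat.card S) (KM.center_eq p)).trans (KM.card_Z p)
end
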